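/- arXiv:1412.6908 — 5 statements merged into one kernel-verified Lean document; each statement's English description precedes it below -/
import Mathlib

section
/- Every echelon subgroup H of the free group F_n of finite rank n is the image of F_n under an endomorphism obtained by performing at most n successive 1-generator subgroup endomorphisms: there exists a descending chain of subgroups F_n = H_0 ≥ H_1 ≥ ⋯ ≥ H_m = H with m ≤ n such that for each k the subgroup H_k is the image of H_{k−1} under a 1-generator subgroup endomorphism of H_{k−1}. -/
/-- The rank of a subgroup: the minimal cardinality of a generating set.
For subgroups of free groups (which are free by Nielsen–Schreier) this is the
cardinality of a free basis. -/
noncomputable def rk {G : Type*} [Group G] (H : Subgroup G) : Cardinal :=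
  ⨅ S : {S : Set G // Subgroup.closure S = H}, Cardinal.mk S.1

/-- A subgroup `H` is inert if `rk (H ⊓ K) ≤ rk K` for every finitely generated `K`. -/
def IsInert {G : Type*} [Group G] (H : Subgroup G) : Prop :=
  ∀ K : Subgroup G, K.FG → rk (H ⊓ K) ≤ rk K

/-- `stage x i` is the subgroup generated by the first `i` elements of `x`. -/
def stage {n : ℕ} {F : Type*} [Group F] (x : Fin n → F) (i : ℕ) : Subgroup F :=
  Subgroup.closure (x '' {j | (j : ℕ) < i})

/-- `x` is an ordered free basis of `F`. -/
def IsOrderedBasis {n : ℕ} {F : Type*} [Group F] (x : Fin n → F) : Prop :=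
  Function.Bijective (FreeGroup.lift x)

/-- `H` is in echelon form with respect to the ordered basis `x`:
`rk (H ⊓ F_i) ≤ rk (H ⊓ F_{i-1}) + 1` for `i = 1, …, n`. -/
def InEchelonForm {n : ℕ} {F : Type*} [Group F] (x : Fin n → F) (H : Subgroup F) : Prop :=
  ∀ i : ℕ, i < n → rk (H ⊓ stage x (i + 1)) ≤ rk (H ⊓ stage x i) + 1

/-- `H` is an echelon subgroup: it is in echelon form with respect to
some ordered free basis. -/
def IsEchelon {n : ℕ} (H : Subgroup (FreeGroup (Fin n))) : Prop :=
  ∃ x : Fin n → FreeGroup (Fin n), IsOrderedBasis x ∧ InEchelonForm x H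

/-- A 1-generator (subgroup) endomorphism: an endomorphism fixing all but (possibly)
one member of some set of free generators. -/
def IsOneGenEndo {G : Type*} [Group G] (φ : G →* G) : Prop :=
  ∃ (ι : Type) (b : FreeGroupBasis ι G) (s : Set ι),
    s.Subsingleton ∧ ∀ i ∉ s, φ (b i) = b i

/-- The subgroup of points fixed by an endomorphism. -/
def fixedSubgroup {G : Type*} [Group G] (φ : G →* G) : Subgroup G where
  carrier := {g | φ g = g}
  one_mem' := by simp
  mul_mem' := by intro a b ha hb; simp only [Set.mem_setOf_eq, map_mul] at *; rw [ha, hb]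
  inv_mem' := by intro a ha; simp only [Set.mem_setOf_eq, map_inv] at *; rw [ha]

/-- An element is primitive if it belongs to some free basis. -/
def IsPrimitive {n : ℕ} (g : FreeGroup (Fin n)) : Prop :=
  ∃ x : Fin n → FreeGroup (Fin n), IsOrderedBasis x ∧ ∃ j, x j = g


theorem ff_tree {ι : Type} (K : Subgroup (FreeGroup ι)) (S : Set ι) :
    ∃ t : FreeGroup ι ⧸ K → FreeGroup ι, t ((1 : FreeGroup ι) : FreeGroup ι ⧸ K) = 1 ∧
      (∀ v, ((t v : FreeGroup ι) : FreeGroup ι ⧸ K) = v) ∧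
      (∀ a ∈ Subgroup.closure (FreeGroup.of '' S),
        t ((a : FreeGroup ι) : FreeGroup ι ⧸ K) ∈ Subgroup.closure (FreeGroup.of '' S)) ∧
      ∀ P : FreeGroup ι ⧸ K → Prop, P ((1 : FreeGroup ι) : FreeGroup ι ⧸ K) →
        (∀ u i, t (FreeGroup.of i • u) = FreeGroup.of i * t u → (P u ↔ P (FreeGroup.of i • u))) →
        ∀ v, P v := by
  classical
  set v0 : FreeGroup ι ⧸ K := ((1 : FreeGroup ι) : FreeGroup ι ⧸ K) with hv0
  set A := Subgroup.closure (FreeGroup.of '' S) with hA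
  have hsm : ∀ g : FreeGroup ι, g • v0 = (g : FreeGroup ι ⧸ K) := by
    intro g
    rw [hv0, MulAction.Quotient.smul_coe, smul_eq_mul, mul_one]
  let wt : List (ι × Bool) → ℕ ×ₗ ℕ := fun L => toLex (L.countP (fun p => p.1 ∉ S), L.length)
  -- minimal words
  have hmin : ∀ v, ∃ L, FreeGroup.mk L • v0 = v ∧
      ∀ L', FreeGroup.mk L' • v0 = v → wt L ≤ wt L' := by
    intro v
    have hne : ({L | FreeGroup.mk L • v0 = v} : Set (List (ι × Bool))).Nonempty := by
      obtain ⟨g, rfl⟩ := QuotientGroup.mk_surjective v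
      refine ⟨g.toWord, ?_⟩
      simp only [Set.mem_ofPred_eq, FreeGroup.mk_toWord]
      exact hsm g
    obtain ⟨L, hL, hm⟩ := (InvImage.wf wt (wellFounded_lt)).has_min _ hne
    exact ⟨L, hL, fun L' hL' => not_lt.1 (hm L' hL')⟩
  choose W hW hWm using hmin
  -- words in A
  have hmkA : ∀ L : List (ι × Bool), (∀ p ∈ L, p.1 ∈ S) → FreeGroup.mk L ∈ A := by
    intro L
    induction L with
    | nil => intro _; exact A.one_mem
    | cons p L ih =>
      intro h
      have : FreeGroup.mk (p :: L) = FreeGroup.mk [p] * FreeGroup.mk L := by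
        rw [FreeGroup.mul_mk]; rfl
      rw [this]
      refine A.mul_mem ?_ (ih fun q hq => h q (List.mem_cons_of_mem _ hq))
      have h1 : FreeGroup.of p.1 ∈ A := Subgroup.subset_closure ⟨_, h p (by simp), rfl⟩
      rcases p with ⟨i, b⟩
      cases b
      · have : FreeGroup.mk [(i, false)] = (FreeGroup.of i)⁻¹ := by
          simp [FreeGroup.of, FreeGroup.inv_mk, FreeGroup.invRev]
        rw [this]; exact A.inv_mem h1
      · exact h1
  have hAmk : ∀ a ∈ A, ∃ L : List (ι × Bool), (∀ p ∈ L, p.1 ∈ S) ∧ FreeGroup.mk L = a := by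
    intro a ha
    induction ha using Subgroup.closure_induction with
    | mem x hx => obtain ⟨i, hi, rfl⟩ := hx; exact ⟨[(i, true)], by simpa using hi, rfl⟩
    | one => exact ⟨[], by simp, rfl⟩
    | mul x y _ _ hx hy =>
      obtain ⟨L, hL, rfl⟩ := hx
      obtain ⟨M, hM, rfl⟩ := hy
      refine ⟨L ++ M, ?_, by rw [FreeGroup.mul_mk]⟩
      intro p hp
      rcases List.mem_append.1 hp with h | h
      · exact hL p h
      · exact hM p h
    | inv x _ hx =>
      obtain ⟨L, hL, rfl⟩ := hx
      refine ⟨FreeGroup.invRev L, ?_, by rw [FreeGroup.inv_mk]⟩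
      intro p hp
      simp only [FreeGroup.invRev, List.mem_reverse, List.mem_map] at hp
      obtain ⟨q, hq, rfl⟩ := hp
      exact hL q hq
  have hWA : ∀ a ∈ A, ∀ p ∈ W (a • v0), p.1 ∈ S := by
    intro a ha
    obtain ⟨L, hL, rfl⟩ := hAmk a ha
    have h := hWm _ L rfl
    have h0 : L.countP (fun p => p.1 ∉ S) = 0 := by
      rw [List.countP_eq_zero]; intro p hp; simpa using hL p hp
    have h1 : (W (FreeGroup.mk L • v0)).countP (fun p => p.1 ∉ S) = 0 := by
      rw [Prod.Lex.toLex_le_toLex] at h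
      simp only [h0] at h
      omega
    rw [List.countP_eq_zero] at h1
    intro p hp
    simpa using h1 p hp
  -- parents
  have hpar : ∀ v, v ≠ v0 → ∃ (s : FreeGroup ι) (u : FreeGroup ι ⧸ K),
      wt (W u) < wt (W v) ∧ v = s • u ∧ (∃ i, s = FreeGroup.of i ∨ s = (FreeGroup.of i)⁻¹) ∧
      ((∃ a ∈ A, v = a • v0) → s ∈ A ∧ ∃ a ∈ A, u = a • v0) := by
    intro v hv
    cases hWv : W v with
    | nil =>
      exfalso
      have := hW v
      rw [hWv] at this
      apply hv
      rw [← this]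
      exact one_smul _ _
    | cons p L =>
      have hv' : v = FreeGroup.mk [p] • (FreeGroup.mk L • v0) := by
        rw [smul_smul, FreeGroup.mul_mk]
        have := hW v
        rw [hWv] at this
        exact this.symm
      refine ⟨FreeGroup.mk [p], FreeGroup.mk L • v0, ?_, hv', ?_, ?_⟩
      · refine lt_of_le_of_lt (hWm _ L rfl) ?_
        rw [Prod.Lex.toLex_lt_toLex]
        simp only [List.countP_cons, List.length_cons]
        split_ifs <;> omega
      · rcases p with ⟨i, b⟩
        refine ⟨i, ?_⟩
        cases b
        · right; simp [FreeGroup.of, FreeGroup.inv_mk, FreeGroup.invRev]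
        · left; rfl
      · rintro ⟨a, ha, rfl⟩
        have h := hWA a ha
        rw [hWv] at h
        refine ⟨hmkA [p] (by simpa using h p (by simp)), FreeGroup.mk L,
          hmkA L (fun q hq => h q (List.mem_cons_of_mem _ hq)), rfl⟩
  choose s par hlt hs hi hpA using hpar
  have wf : WellFounded (fun u v => wt (W u) < wt (W v)) :=
    InvImage.wf (fun v => wt (W v)) wellFounded_lt
  obtain ⟨t, ht⟩ : ∃ t : FreeGroup ι ⧸ K → FreeGroup ι, ∀ v, t v =
      if h : v = v0 then 1 else s v h * t (par v h) :=
    ⟨wf.fix (fun v rec => if h : v = v0 then 1 else s v h * rec (par v h) (hlt v h)),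
      fun v => wf.fix_eq _ v⟩
  have ht0 : t v0 = 1 := by rw [ht]; simp
  refine ⟨t, ht0, ?_, ?_, ?_⟩
  · intro v
    rw [← hsm]
    induction v using wf.induction with
    | _ v ih =>
      by_cases h : v = v0
      · rw [h, ht0, one_smul]
      · rw [ht, dif_neg h, mul_smul, ih _ (hlt v h), ← hs v h]
  · have key : ∀ v, (∃ a ∈ A, v = a • v0) → t v ∈ A := by
      intro v
      induction v using wf.induction with
      | _ v ih =>
        intro hv
        by_cases h : v = v0
        · rw [h, ht0]; exact A.one_mem
        · rw [ht, dif_neg h]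
          exact A.mul_mem (hpA v h hv).1 (ih _ (hlt v h) (hpA v h hv).2)
    intro a ha
    exact key _ ⟨a, ha, (hsm a).symm⟩
  · intro P h0 hP v
    induction v using wf.induction with
    | _ v ih =>
      by_cases h : v = v0
      · rw [h]; exact h0
      · have h1 := ih _ (hlt v h)
        have h2 := hs v h
        have h3 : t v = s v h * t (par v h) := by rw [ht, dif_neg h]
        obtain ⟨i, h4 | h4⟩ := hi v h
        · rw [h4] at h2 h3
          rw [h2]
          refine (hP _ i ?_).1 h1
          rw [← h2, h3]
        · rw [h4] at h2 h3
          have h5 : par v h = FreeGroup.of i • v := by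
            conv_rhs => rw [h2]
            rw [smul_inv_smul]
          refine (hP v i ?_).2 (h5 ▸ h1)
          rw [← h5, h3, mul_inv_cancel_left]

/-- Cocycle attached to a function on edges of the Schreier graph. -/
theorem ff_cocycle {ι V Q : Type} [MulAction (FreeGroup ι) V] [Group Q] (f : V → ι → Q) :
    ∃ F : FreeGroup ι → V → Q, (∀ i v, F (FreeGroup.of i) v = f v i) ∧
      ∀ g h v, F (g * h) v = F g (h • v) * F h v := by
  let σ : ι → Equiv.Perm (V × Q) := fun i =>
    { toFun := fun p => (FreeGroup.of i • p.1, f p.1 i * p.2)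
      invFun := fun p => ((FreeGroup.of i)⁻¹ • p.1, (f ((FreeGroup.of i)⁻¹ • p.1) i)⁻¹ * p.2)
      left_inv := fun p => by simp
      right_inv := fun p => by simp }
  let ρ : FreeGroup ι →* Equiv.Perm (V × Q) := FreeGroup.lift σ
  have hρ : ∀ g v, ∃ r : Q, ∀ q, ρ g (v, q) = (g • v, r * q) := by
    intro g
    induction g using FreeGroup.induction_on with
    | C1 => intro v; exact ⟨1, fun q => by simp⟩
    | of i => intro v; exact ⟨f v i, fun q => by simp [ρ, σ]⟩
    | inv_of i _ =>
      intro v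
      refine ⟨(f ((FreeGroup.of i)⁻¹ • v) i)⁻¹, fun q => ?_⟩
      simp only [map_inv, ρ, FreeGroup.lift_apply_of]
      rfl
    | mul x y hx hy =>
      intro v
      obtain ⟨r, hr⟩ := hy v
      obtain ⟨r', hr'⟩ := hx (y • v)
      refine ⟨r' * r, fun q => ?_⟩
      rw [map_mul, Equiv.Perm.mul_apply, hr, hr', mul_smul, mul_assoc]
  choose F hF using hρ
  refine ⟨F, ?_, ?_⟩
  · intro i v
    have h := hF (FreeGroup.of i) v 1
    have h2 : ρ (FreeGroup.of i) (v, 1) = (FreeGroup.of i • v, f v i * 1) := by simp [ρ, σ]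
    rw [h2] at h
    simpa using (congrArg Prod.snd h).symm
  · intro g h v
    have h1 := hF (g * h) v 1
    rw [map_mul, Equiv.Perm.mul_apply, hF h, hF g] at h1
    simpa using (congrArg Prod.snd h1).symm

/-- `K ∩ ⟨S⟩` is a free factor of `K`. -/
theorem free_factor {ι : Type} (K : Subgroup (FreeGroup ι)) (S : Set ι) :
    ∃ (E : Type) (e : E → FreeGroup ι) (B : Set E), Function.Injective (FreeGroup.lift e) ∧
      Subgroup.closure (Set.range e) = K ∧
      Subgroup.closure (e '' B) = K ⊓ Subgroup.closure (FreeGroup.of '' S) := by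
  classical
  obtain ⟨t, ht0, ht, htA, hind⟩ := ff_tree K S
  set v0 : FreeGroup ι ⧸ K := ((1 : FreeGroup ι) : FreeGroup ι ⧸ K) with hv0
  have hsm : ∀ g : FreeGroup ι, g • v0 = (g : FreeGroup ι ⧸ K) := by
    intro g
    rw [hv0, MulAction.Quotient.smul_coe, smul_eq_mul, mul_one]
  have hsm' : ∀ g : FreeGroup ι, g ∈ K ↔ g • v0 = v0 := by
    intro g
    rw [hsm, hv0, QuotientGroup.eq]
    simp
  have ht' : ∀ v, t v • v0 = v := fun v => by rw [hsm, ht]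
  let e : (FreeGroup ι ⧸ K) × ι → FreeGroup ι := fun p =>
    (t (FreeGroup.of p.2 • p.1))⁻¹ * (FreeGroup.of p.2 * t p.1)
  have heK : ∀ p, e p ∈ K := by
    intro p
    rw [hsm']
    simp only [e, mul_smul, ht']
    rw [inv_smul_eq_iff, ht']
  let E := {p : (FreeGroup ι ⧸ K) × ι // e p ≠ 1}
  -- generation
  have gen : ∀ (S' : Set ι) (C : Subgroup (FreeGroup ι)),
      (∀ a ∈ Subgroup.closure (FreeGroup.of '' S'), ∀ i ∈ S', e (a • v0, i) ∈ C) →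
      K ⊓ Subgroup.closure (FreeGroup.of '' S') ≤ C := by
    intro S' C hC
    have key : ∀ g ∈ Subgroup.closure (FreeGroup.of '' S'),
        ∀ a ∈ Subgroup.closure (FreeGroup.of '' S'),
        (t (g • a • v0))⁻¹ * (g * t (a • v0)) ∈ C := by
      intro g hg
      induction hg using Subgroup.closure_induction with
      | mem x hx => obtain ⟨i, hi, rfl⟩ := hx; intro a ha; exact hC a ha i hi
      | one => intro a ha; simp
      | mul x y hx hy ihx ihy =>
        intro a ha
        have h1 := ihx (y * a) (Subgroup.mul_mem _ hy ha)
        have h2 := ihy a ha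
        have := C.mul_mem h1 h2
        rw [mul_smul] at this
        rw [mul_smul]
        convert this using 1
        group
      | inv x hx ihx =>
        intro a ha
        have h1 := C.inv_mem (ihx (x⁻¹ * a) (Subgroup.mul_mem _ (Subgroup.inv_mem _ hx) ha))
        rw [mul_smul, smul_inv_smul] at h1
        convert h1 using 1
        group
    rintro g ⟨hgK, hg⟩
    have := key g hg 1 (Subgroup.one_mem _)
    rw [one_smul, (hsm' g).1 hgK, ht0] at this
    simpa using this
  refine ⟨E, fun p => e p.1, {p | (∃ a ∈ Subgroup.closure (FreeGroup.of '' S), p.1.1 = a • v0) ∧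
    p.1.2 ∈ S}, ?_, ?_, ?_⟩
  · -- freeness
    let f : (FreeGroup ι ⧸ K) → ι → FreeGroup E := fun v i =>
      if h : e (v, i) ≠ 1 then FreeGroup.of ⟨(v, i), h⟩ else 1
    obtain ⟨F, hFf, hF⟩ := ff_cocycle f
    have hF1 : ∀ v, F 1 v = 1 := by
      intro v
      have := hF 1 1 v
      rw [one_smul, mul_one] at this
      simpa using this
    have hFt : ∀ v, F (t v) v0 = 1 := by
      apply hind
      · rw [ht0, hF1]
      · intro u i hu
        have h1 : e (u, i) = 1 := by simp only [e, hu]; group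
        rw [hu, hF, ht', hFf]
        have : f u i = 1 := by simp [f, h1]
        rw [this, one_mul]
    have hFe : ∀ p : E, F (e p.1) v0 = FreeGroup.of p := by
      rintro ⟨⟨v, i⟩, hp⟩
      have h2 : F (t (FreeGroup.of i • v))⁻¹ (FreeGroup.of i • v) = 1 := by
        have := hF (t (FreeGroup.of i • v))⁻¹ (t (FreeGroup.of i • v)) v0
        rw [inv_mul_cancel, hF1, ht', hFt, mul_one] at this
        exact this.symm
      simp only [e]
      rw [hF, hF, mul_smul, ht', hFt, hFf, h2, mul_one, one_mul]
      simp [f, hp]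
    let Φ : K →* FreeGroup E :=
      { toFun := fun k => F k v0
        map_one' := hF1 v0
        map_mul' := fun k l => by
          rw [Subgroup.coe_mul, hF, (hsm' l).1 l.2] }
    let ψ : FreeGroup E →* K := FreeGroup.lift (fun p => ⟨e p.1, heK p.1⟩)
    have h1 : Φ.comp ψ = MonoidHom.id _ := by
      ext p
      simp [Φ, ψ, hFe]
    have h2 : FreeGroup.lift (fun p : E => e p.1) = K.subtype.comp ψ := by
      ext p
      simp [ψ]
    rw [h2]
    have h3 : Function.Injective ψ := by
      apply Function.LeftInverse.injective (g := Φ)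
      intro x
      exact DFunLike.congr_fun h1 x
    exact Subtype.val_injective.comp h3
  · apply le_antisymm
    · rw [Subgroup.closure_le]
      rintro _ ⟨p, rfl⟩
      exact heK _
    · refine le_trans ?_ (gen Set.univ _ ?_)
      · rw [Set.image_univ, FreeGroup.closure_range_of, inf_top_eq]
      · intro a _ i _
        by_cases h : e (a • v0, i) = 1
        · rw [h]; exact Subgroup.one_mem _
        · exact Subgroup.subset_closure ⟨⟨_, h⟩, rfl⟩
  · apply le_antisymm
    · rw [Subgroup.closure_le]
      rintro _ ⟨⟨⟨v, i⟩, hp⟩, ⟨⟨a, ha, hv⟩, hi⟩, rfl⟩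
      simp only at hv hi
      subst hv
      have h1 : FreeGroup.of i ∈ Subgroup.closure (FreeGroup.of '' S) :=
        Subgroup.subset_closure ⟨i, hi, rfl⟩
      refine ⟨heK _, ?_⟩
      simp only [e]
      refine Subgroup.mul_mem _ (Subgroup.inv_mem _ ?_) (Subgroup.mul_mem _ h1 ?_)
      · rw [smul_smul, hsm]
        exact htA _ (Subgroup.mul_mem _ h1 ha)
      · rw [hsm]
        exact htA _ ha
    · apply gen
      intro a ha i hi
      by_cases h : e (a • v0, i) = 1
      · rw [h]; exact Subgroup.one_mem _
      · exact Subgroup.subset_closure ⟨⟨_, h⟩, ⟨⟨a, ha, rfl⟩, hi⟩, rfl⟩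

/-- Free groups are residually finite. -/
theorem free_resfin {ι : Type} (g : FreeGroup ι) (hg : g ≠ 1) :
    ∃ (X : Type) (_ : Finite X) (ρ : FreeGroup ι →* Equiv.Perm X), ρ g ≠ 1 := by
  classical
  obtain ⟨L, rfl⟩ : ∃ L, FreeGroup.mk L = g := ⟨g.toWord, FreeGroup.mk_toWord⟩
  let B : Set (FreeGroup ι) := {x | ∃ M, M <:+ L ∧ FreeGroup.mk M = x}
  have hB : B.Finite := by
    have : B = FreeGroup.mk '' {M | M ∈ L.tails} := by
      ext x; simp [B]
    rw [this]
    exact (List.finite_toSet _).image _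
  haveI : Fintype B := hB.fintype
  let eqv : ∀ i : ι, {x : B // FreeGroup.of i * x.1 ∈ B} ≃ {x : B // (FreeGroup.of i)⁻¹ * x.1 ∈ B} :=
    fun i =>
    { toFun := fun x => ⟨⟨_, x.2⟩, by simp⟩
      invFun := fun x => ⟨⟨_, x.2⟩, by simp⟩
      left_inv := fun x => by simp
      right_inv := fun x => by simp }
  let σ : ι → Equiv.Perm B := fun i => (eqv i).extendSubtype
  have hσ : ∀ i (x : B) (hx : FreeGroup.of i * x.1 ∈ B), σ i x = ⟨_, hx⟩ := by
    intro i x hx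
    exact (eqv i).extendSubtype_apply_of_mem x hx
  have key : ∀ M (hM : M <:+ L), FreeGroup.lift σ (FreeGroup.mk M) ⟨1, [], by simp, rfl⟩ =
      ⟨FreeGroup.mk M, M, hM, rfl⟩ := by
    intro M
    induction M with
    | nil => intro hM; rfl
    | cons p M ih =>
      intro hM
      have hM' : M <:+ L := (List.suffix_cons p M).trans hM
      have h1 : FreeGroup.mk (p :: M) = FreeGroup.mk [p] * FreeGroup.mk M := by
        rw [FreeGroup.mul_mk]; rfl
      have h2 : FreeGroup.lift σ (FreeGroup.mk (p :: M)) =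
        FreeGroup.lift σ (FreeGroup.mk [p]) * FreeGroup.lift σ (FreeGroup.mk M) := by
        rw [h1, map_mul]
      rw [h2, Equiv.Perm.mul_apply, ih hM']
      rcases p with ⟨i, b⟩
      cases b
      · have h3 : FreeGroup.mk [(i, false)] = (FreeGroup.of i)⁻¹ := by
          simp [FreeGroup.of, FreeGroup.inv_mk, FreeGroup.invRev]
        rw [h3, map_inv, FreeGroup.lift_apply_of, Equiv.Perm.inv_eq_iff_eq]
        have h4 : FreeGroup.of i * FreeGroup.mk ((i, false) :: M) = FreeGroup.mk M := by
          rw [h1, h3, mul_inv_cancel_left]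
        rw [hσ i _ (by rw [h4]; exact ⟨M, hM', rfl⟩)]
        exact Subtype.ext h4.symm
      · have h3 : FreeGroup.mk [(i, true)] = FreeGroup.of i := rfl
        rw [h3, FreeGroup.lift_apply_of]
        have h4 : FreeGroup.of i * FreeGroup.mk M = FreeGroup.mk ((i, true) :: M) := by
          rw [h1, h3]
        rw [hσ i _ (by rw [h4]; exact ⟨_, hM, rfl⟩)]
        exact Subtype.ext h4
  refine ⟨B, inferInstance, FreeGroup.lift σ, ?_⟩
  intro h
  have h1 := key L (List.suffix_refl L)
  rw [h] at h1
  exact hg (congrArg Subtype.val h1).symm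

theorem free_rank_le {α β : Type} [Finite α] (φ : FreeGroup α →* FreeGroup β)
    (hφ : Function.Surjective φ) : Finite β ∧ Nat.card β ≤ Nat.card α := by
  classical
  let Q := Multiplicative (ZMod 2)
  let r : (β → Q) → (α → Q) := fun f a => FreeGroup.lift f (φ (FreeGroup.of a))
  have hr : Function.Injective r := by
    intro f g h
    apply FreeGroup.lift.injective
    have : (FreeGroup.lift f).comp φ = (FreeGroup.lift g).comp φ := by
      ext a; exact congrFun h a
    exact (MonoidHom.cancel_right hφ).1 this
  have : Finite Q := inferInstanceAs (Finite (ZMod 2))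
  have : Finite (β → Q) := Finite.of_injective r hr
  have hβ : Finite β := by
    let d : β → (β → Q) := fun b =>
      Pi.mulSingle b (Multiplicative.ofAdd (1 : ZMod 2))
    apply Finite.of_injective d
    intro a b hab
    by_contra hne
    have := congrFun hab a
    simp only [d, Pi.mulSingle_eq_same, Pi.mulSingle_eq_of_ne hne] at this
    exact absurd this (by decide)
  refine ⟨hβ, ?_⟩
  have h1 := Nat.card_le_card_of_injective r hr
  have h2 : Nat.card Q = 2 := by
    show Nat.card (ZMod 2) = 2
    simp
  rw [Nat.card_fun, Nat.card_fun, h2] at h1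
  exact (Nat.pow_le_pow_iff_right (by norm_num)).1 h1

theorem free_hopf {α β : Type} [Finite α] (φ : FreeGroup α →* FreeGroup β)
    (hφ : Function.Surjective φ) (hc : Nat.card α ≤ Nat.card β) : Function.Injective φ := by
  obtain ⟨hβ, hc'⟩ := free_rank_le φ hφ
  have heq : Nat.card α = Nat.card β := le_antisymm hc hc'
  rw [injective_iff_map_eq_one]
  intro g hg
  by_contra hne
  obtain ⟨X, hX, ρ, hρ⟩ := free_resfin g hne
  let Q := Equiv.Perm X
  let r : (β → Q) → (α → Q) := fun f a => FreeGroup.lift f (φ (FreeGroup.of a))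
  have hr : Function.Injective r := by
    intro f g h
    apply FreeGroup.lift.injective
    have : (FreeGroup.lift f).comp φ = (FreeGroup.lift g).comp φ := by
      ext1 a; exact congrFun h a
    exact (MonoidHom.cancel_right hφ).1 this
  have hb : Function.Bijective r := by
    rw [Nat.bijective_iff_injective_and_card]
    refine ⟨hr, ?_⟩
    rw [Nat.card_fun, Nat.card_fun, heq]
  obtain ⟨f, hf⟩ := hb.2 (fun a => ρ (FreeGroup.of a))
  have : (FreeGroup.lift f).comp φ = ρ := by
    ext1 a; exact congrFun hf a
  apply hρ
  rw [← this, MonoidHom.comp_apply, hg, map_one]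

/-- rank comparison: a free family is no larger than any finite generating family. -/
theorem free_family_le {G E α : Type} [Group G] [Finite α] (e : E → G) (y : α → G)
    (he : Function.Injective (FreeGroup.lift e))
    (h : Subgroup.closure (Set.range e) = Subgroup.closure (Set.range y)) :
    (Finite E ∧ Nat.card E ≤ Nat.card α) ∧
      (Nat.card α ≤ Nat.card E → Function.Injective (FreeGroup.lift y)) := by
  rw [← FreeGroup.range_lift_eq_closure, ← FreeGroup.range_lift_eq_closure] at h
  let eq : FreeGroup E ≃* (FreeGroup.lift e).range := MonoidHom.ofInjective he
  let eq2 : (FreeGroup.lift y).range ≃* FreeGroup E := (MulEquiv.subgroupCongr h.symm).trans eq.symm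
  let φ : FreeGroup α →* FreeGroup E := eq2.toMonoidHom.comp (FreeGroup.lift y).rangeRestrict
  have hφ : Function.Surjective φ :=
    eq2.surjective.comp (MonoidHom.rangeRestrict_surjective _)
  refine ⟨free_rank_le φ hφ, fun hc => ?_⟩
  have h1 := free_hopf φ hφ hc
  have h2 : Function.Injective (FreeGroup.lift y).rangeRestrict :=
    Function.Injective.of_comp (f := eq2) h1
  exact Subtype.val_injective.comp h2

theorem replace_free {ι : Type} [Finite ι] [DecidableEq ι] (k : ι) (g : FreeGroup ι)
    (hg : g ∉ Subgroup.closure (FreeGroup.of '' {k}ᶜ)) :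
    Function.Injective (FreeGroup.lift (Function.update FreeGroup.of k g)) := by
  obtain ⟨E, e, B, he, heM, heB⟩ := free_factor
    (Subgroup.closure (Set.range (Function.update FreeGroup.of k g))) {k}ᶜ
  have hle : Subgroup.closure (FreeGroup.of '' {k}ᶜ) ≤
      Subgroup.closure (Set.range (Function.update FreeGroup.of k g)) := by
    apply Subgroup.closure_mono
    rintro _ ⟨j, hj, rfl⟩
    exact ⟨j, Function.update_of_ne hj _ _⟩
  rw [inf_eq_right.2 hle] at heB
  obtain ⟨⟨hE, -⟩, hinj⟩ := free_family_le e _ he heM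
  apply hinj
  have hBlt : Nat.card B < Nat.card E := by
    have : B ≠ Set.univ := by
      intro h
      rw [h, Set.image_univ, heM] at heB
      apply hg
      rw [← heB]
      exact Subgroup.subset_closure ⟨k, Function.update_self _ _ _⟩
    rw [Nat.card_coe_set_eq, ← Set.ncard_univ]
    exact Set.ncard_lt_ncard (Set.ssubset_univ_iff.2 this) (Set.toFinite _)
  have h1 := (free_family_le (fun j : ({k}ᶜ : Set ι) => FreeGroup.of j.1) (fun b : B => e b) (by
      have : FreeGroup.lift (fun j : ({k}ᶜ : Set ι) => FreeGroup.of j.1) =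
        FreeGroup.map (Subtype.val) := by ext j; simp
      rw [this]
      exact FreeGroup.map_injective Subtype.val_injective) (by
      rw [← Set.image_eq_range, ← Set.image_eq_range]
      exact heB.symm)).1.2
  have h2 : Nat.card ({k}ᶜ : Set ι) + 1 = Nat.card ι := by
    rw [Nat.card_coe_set_eq]
    have := Set.ncard_add_ncard_compl ({k} : Set ι)
    rw [Set.ncard_singleton] at this
    omega
  omega

theorem free_factor' {ι F : Type} [Group F] (x : ι → F) (hx : Function.Bijective (FreeGroup.lift x))
    (K : Subgroup F) (S : Set ι) :
    ∃ (E : Type) (e : E → F) (B : Set E), Function.Injective (FreeGroup.lift e) ∧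
      Subgroup.closure (Set.range e) = K ∧
      Subgroup.closure (e '' B) = K ⊓ Subgroup.closure (x '' S) := by
  obtain ⟨E, e, B, h1, h2, h3⟩ := free_factor (K.comap (FreeGroup.lift x)) S
  refine ⟨E, fun i => FreeGroup.lift x (e i), B, ?_, ?_, ?_⟩
  · have : FreeGroup.lift (fun i => FreeGroup.lift x (e i)) =
        (FreeGroup.lift x).comp (FreeGroup.lift e) := by ext; simp
    rw [this]
    exact hx.1.comp h1
  · have := congrArg (Subgroup.map (FreeGroup.lift x)) h2
    rw [Subgroup.map_comap_eq_self_of_surjective hx.2, MonoidHom.map_closure, ← Set.range_comp]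
      at this
    exact this
  · have := congrArg (Subgroup.map (FreeGroup.lift x)) h3
    rw [Subgroup.map_inf _ _ _ hx.1, Subgroup.map_comap_eq_self_of_surjective hx.2,
      MonoidHom.map_closure, MonoidHom.map_closure, Set.image_image, Set.image_image] at this
    simpa using this

theorem rk_le {G : Type} [Group G] {K : Subgroup G} {S : Set G} (h : Subgroup.closure S = K) :
    rk K ≤ Cardinal.mk S :=
  ciInf_le' (fun S : {S : Set G // Subgroup.closure S = K} => Cardinal.mk S.1) ⟨S, h⟩

theorem rk_attained {G : Type} [Group G] (K : Subgroup G) :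
    ∃ S : Set G, Subgroup.closure S = K ∧ Cardinal.mk S = rk K := by
  have : Nonempty {S : Set G // Subgroup.closure S = K} := ⟨⟨K, Subgroup.closure_eq K⟩⟩
  obtain ⟨S, hS⟩ := ciInf_mem (fun S : {S : Set G // Subgroup.closure S = K} => Cardinal.mk S.1)
  exact ⟨S.1, S.2, hS⟩

theorem step_gen {ι F : Type} [Group F] (x : ι → F) (hx : Function.Bijective (FreeGroup.lift x))
    (K : Subgroup F) (S : Set ι) (hfin : rk (K ⊓ Subgroup.closure (x '' S)) < Cardinal.aleph0)
    (hrk : rk K ≤ rk (K ⊓ Subgroup.closure (x '' S)) + 1) :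
    ∃ h : F, K = (K ⊓ Subgroup.closure (x '' S)) ⊔ Subgroup.closure {h} := by
  obtain ⟨E, e, B, he, heK, heB⟩ := free_factor' x hx K S
  obtain ⟨T, hT, hTc⟩ := rk_attained K
  have hTfin : Cardinal.mk T < Cardinal.aleph0 := by
    rw [hTc]
    exact hrk.trans_lt (Cardinal.add_lt_aleph0 hfin Cardinal.one_lt_aleph0)
  have : Finite T := Cardinal.lt_aleph0_iff_finite.1 hTfin
  obtain ⟨⟨hE, hcard⟩, -⟩ := free_family_le e (fun t : T => t.1) he (by
    rw [heK, Subtype.range_coe, hT])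
  have h1 : Nat.card E ≤ B.ncard + 1 := by
    have h2 : rk (K ⊓ Subgroup.closure (x '' S)) ≤ Cardinal.mk B :=
      (rk_le heB).trans Cardinal.mk_image_le
    have h3 : Cardinal.mk T ≤ Cardinal.mk B + 1 := by
      rw [hTc]; exact hrk.trans (by gcongr)
    rw [← Nat.cast_card, ← Nat.cast_card (α := B)] at h3
    have h4 : Nat.card T ≤ Nat.card B + 1 := by exact_mod_cast h3
    rw [Nat.card_coe_set_eq B] at h4
    omega
  have h2 : (Bᶜ).Subsingleton := by
    have := Set.ncard_add_ncard_compl B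
    rw [← Set.ncard_le_one_iff_subsingleton]
    omega
  rw [← heB]
  rcases Set.eq_empty_or_nonempty Bᶜ with h | ⟨b, hb⟩
  · refine ⟨1, ?_⟩
    rw [Set.compl_empty_iff] at h
    rw [h, Set.image_univ, heK]
    simp
  · refine ⟨e b, ?_⟩
    rw [← Subgroup.closure_union]
    conv_lhs => rw [← heK]
    congr 1
    ext z
    constructor
    · rintro ⟨c, rfl⟩
      by_cases hc : c ∈ B
      · exact Or.inl ⟨c, hc, rfl⟩
      · exact Or.inr (by rw [h2 hc hb]; rfl)
    · rintro (⟨c, _, rfl⟩ | hz)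
      · exact ⟨c, rfl⟩
      · exact ⟨b, hz.symm⟩

theorem endo_exists {D F : Type} [Group F] [DecidableEq D] (b : D → F)
    (hb : Function.Injective (FreeGroup.lift b)) (L : Subgroup F)
    (hL : Subgroup.closure (Set.range b) = L) (k : D) (g : F) (hg : g ∈ L) :
    ∃ φ : L →* L, IsOneGenEndo φ ∧
      Subgroup.map L.subtype φ.range = Subgroup.closure (Set.range (Function.update b k g)) := by
  subst hL
  rw [← FreeGroup.range_lift_eq_closure] at *
  let eqv : FreeGroup D ≃* (FreeGroup.lift b).range := MonoidHom.ofInjective hb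
  let bas : FreeGroupBasis D (FreeGroup.lift b).range := FreeGroupBasis.ofRepr eqv.symm
  have hbas : ∀ d, bas d = eqv (FreeGroup.of d) := fun d => rfl
  let z : D → (FreeGroup.lift b).range := Function.update bas k ⟨g, hg⟩
  let ψ : FreeGroup D →* (FreeGroup.lift b).range := FreeGroup.lift z
  refine ⟨ψ.comp eqv.symm.toMonoidHom, ⟨D, bas, {k}, Set.subsingleton_singleton, ?_⟩, ?_⟩
  · intro i hi
    rw [hbas]
    simp only [MonoidHom.comp_apply, MulEquiv.toMonoidHom_eq_coe, MonoidHom.coe_coe,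
      MulEquiv.symm_apply_apply, ψ, FreeGroup.lift_apply_of, z]
    rw [Function.update_of_ne (by simpa using hi), hbas]
  · have h1 : (ψ.comp eqv.symm.toMonoidHom).range = ψ.range := by
      rw [MonoidHom.range_comp,
        MonoidHom.range_eq_top (f := eqv.symm.toMonoidHom).2 eqv.symm.surjective,
        ← MonoidHom.range_eq_map]
    rw [h1, ← FreeGroup.range_lift_eq_closure, MonoidHom.map_range]
    congr 1
    ext d
    simp only [MonoidHom.comp_apply, ψ, FreeGroup.lift_apply_of, z]
    by_cases hd : d = k
    · subst hd; simp
    · rw [Function.update_of_ne hd, Function.update_of_ne hd, hbas]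
      simp [eqv, MonoidHom.ofInjective_apply]

/-- The mixed family: first `k` members of `x`, then members of `h`. -/
def mixFam {n : ℕ} {F : Type} (x h : Fin n → F) (k : ℕ) : Fin n → F :=
  fun j => if (j : ℕ) < k then x j else h j

theorem mix_free {n : ℕ} {F : Type} [Group F] (x h : Fin n → F)
    (hx : Function.Injective (FreeGroup.lift x))
    (hh : ∀ j : Fin n, h j ∈ stage x (j + 1))
    (hh' : ∀ j : Fin n, h j = 1 ∨ h j ∉ stage x j) (k : ℕ) (hk : k ≤ n) :
    ∃ D : Set (Fin n), (∀ j : Fin n, (j : ℕ) < k → j ∈ D) ∧ (∀ j ∉ D, mixFam x h k j = 1) ∧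
      Function.Injective (FreeGroup.lift (fun d : D => mixFam x h k d)) := by
  classical
  induction hk using Nat.decreasingInduction with
  | self =>
    refine ⟨Set.univ, by simp, by simp, ?_⟩
    have : FreeGroup.lift (fun d : (Set.univ : Set (Fin n)) => mixFam x h n d) =
        (FreeGroup.lift x).comp (FreeGroup.map Subtype.val) := by
      ext d; simp [mixFam]
    rw [this]
    exact hx.comp (FreeGroup.map_injective Subtype.val_injective)
  | of_succ k hk ih =>
    obtain ⟨D, hD1, hD2, hD3⟩ := ih
    let kk : Fin n := ⟨k, hk⟩
    have hne : ∀ j, j ≠ kk → mixFam x h k j = mixFam x h (k + 1) j := by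
      intro j hj
      have : (j : ℕ) ≠ k := fun h => hj (Fin.ext h)
      simp only [mixFam]
      by_cases h1 : (j : ℕ) < k
      · rw [if_pos h1, if_pos (by omega)]
      · rw [if_neg h1, if_neg (by omega)]
    have hkk : mixFam x h k kk = h kk := by simp [mixFam, kk]
    have hlow : ∀ j : Fin n, (j : ℕ) < k + 1 → mixFam x h (k + 1) j = x j := by
      intro j hj; simp [mixFam, hj]
    rcases hh' kk with h1 | h1
    · refine ⟨D \ {kk}, ?_, ?_, ?_⟩
      · intro j hj
        refine ⟨hD1 j (by omega), ?_⟩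
        rintro rfl
        simp [kk] at hj
      · intro j hj
        by_cases hjk : j = kk
        · rw [hjk, hkk, h1]
        · rw [hne j hjk]
          exact hD2 j (fun h => hj ⟨h, hjk⟩)
      · have : FreeGroup.lift (fun d : (D \ {kk} : Set (Fin n)) => mixFam x h k d) =
          (FreeGroup.lift (fun d : D => mixFam x h (k + 1) d)).comp
            (FreeGroup.map (Set.inclusion Set.sdiff_subset)) := by
          ext d
          simp only [FreeGroup.lift_apply_of, MonoidHom.comp_apply, FreeGroup.map.of]
          exact hne _ d.2.2
        rw [this]
        exact hD3.comp (FreeGroup.map_injective (Set.inclusion_injective _))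
    · have hkD : kk ∈ D := hD1 kk (by simp [kk])
      refine ⟨D, fun j hj => hD1 j (by omega), ?_, ?_⟩
      · intro j hj
        rw [hne j (by rintro rfl; exact hj hkD)]
        exact hD2 j hj
      · let θ := FreeGroup.lift (fun d : D => mixFam x h (k + 1) d)
        have hst : ∀ m, m ≤ k + 1 →
            (Subgroup.closure (FreeGroup.of '' {d : D | (d.1 : ℕ) < m})).map θ = stage x m := by
          intro m hm
          rw [MonoidHom.map_closure, stage, Set.image_image]
          congr 1
          ext z
          constructor
          · rintro ⟨d, hd, rfl⟩
            refine ⟨d.1, hd, ?_⟩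
            have hd' : (d.1 : ℕ) < m := hd
            simp only [θ, FreeGroup.lift_apply_of]
            rw [hlow _ (by omega)]
          · rintro ⟨j, hj, rfl⟩
            have hj' : (j : ℕ) < m := hj
            refine ⟨⟨j, hD1 j (by omega)⟩, hj, ?_⟩
            simp only [θ, FreeGroup.lift_apply_of]
            rw [hlow _ (by omega)]
        have h2 := hh kk
        have hkv : (kk : ℕ) = k := rfl
        rw [hkv] at h1 h2
        rw [← hst (k + 1) le_rfl] at h2
        rw [← hst k (by omega)] at h1
        obtain ⟨w, hw, hwh⟩ := h2
        let kD : D := ⟨kk, hkD⟩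
        have hnot : w ∉ Subgroup.closure (FreeGroup.of '' ({kD}ᶜ : Set D)) := by
          intro hw2
          apply h1
          refine ⟨w, ?_, hwh⟩
          let r : FreeGroup D →* FreeGroup D :=
            FreeGroup.lift (fun d => if (d.1 : ℕ) < k + 1 then FreeGroup.of d else 1)
          have hr1 : r w = w := by
            have : Subgroup.closure (FreeGroup.of '' {d : D | (d.1 : ℕ) < k + 1}) ≤
                MonoidHom.eqLocus r (MonoidHom.id _) := by
              rw [Subgroup.closure_le]
              rintro _ ⟨d, hd, rfl⟩
              have hd' : (d.1 : ℕ) < k + 1 := hd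
              show r (FreeGroup.of d) = FreeGroup.of d
              simp only [r, FreeGroup.lift_apply_of]
              rw [if_pos hd']
            exact this hw
          have hr2 : Subgroup.closure (FreeGroup.of '' ({kD}ᶜ : Set D)) ≤
              (Subgroup.closure (FreeGroup.of '' {d : D | (d.1 : ℕ) < k})).comap r := by
            rw [Subgroup.closure_le]
            rintro _ ⟨d, hd, rfl⟩
            show r (FreeGroup.of d) ∈ Subgroup.closure (FreeGroup.of '' {d : D | (d.1 : ℕ) < k})
            simp only [r, FreeGroup.lift_apply_of]
            split_ifs with hd'
            · apply Subgroup.subset_closure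
              refine ⟨d, ?_, rfl⟩
              have : (d.1 : ℕ) ≠ k := fun h => hd (Subtype.ext (Fin.ext h))
              show (d.1 : ℕ) < k
              omega
            · exact Subgroup.one_mem _
          have := hr2 hw2
          rw [Subgroup.mem_comap, hr1] at this
          exact this
        have hinj := replace_free kD w hnot
        have : FreeGroup.lift (fun d : D => mixFam x h k d) =
            θ.comp (FreeGroup.lift (Function.update FreeGroup.of kD w)) := by
          ext d
          simp only [FreeGroup.lift_apply_of, MonoidHom.comp_apply]
          by_cases hd : d = kD
          · rw [hd, Function.update_self, hwh]
            exact hkk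
          · rw [Function.update_of_ne hd]
            simp only [θ, FreeGroup.lift_apply_of]
            exact hne _ (fun h => hd (Subtype.ext h))
        rw [this]
        exact hD3.comp hinj

theorem mix_endo {n : ℕ} {F : Type} [Group F] (x h : Fin n → F)
    (hx : Function.Injective (FreeGroup.lift x))
    (hh : ∀ j : Fin n, h j ∈ stage x (j + 1))
    (hh' : ∀ j : Fin n, h j = 1 ∨ h j ∉ stage x j) (k : ℕ) (hk : k < n) :
    ∃ φ : Subgroup.closure (Set.range (mixFam x h (k + 1))) →*
        Subgroup.closure (Set.range (mixFam x h (k + 1))), IsOneGenEndo φ ∧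
      Subgroup.map (Subgroup.closure (Set.range (mixFam x h (k + 1)))).subtype φ.range =
        Subgroup.closure (Set.range (mixFam x h k)) := by
  classical
  obtain ⟨D, hD1, hD2, hD3⟩ := mix_free x h hx hh hh' (k + 1) hk
  let kk : Fin n := ⟨k, hk⟩
  have hkD : kk ∈ D := hD1 kk (by simp [kk])
  have hL : Subgroup.closure (Set.range (fun d : D => mixFam x h (k + 1) d)) =
      Subgroup.closure (Set.range (mixFam x h (k + 1))) := by
    apply le_antisymm
    · apply Subgroup.closure_mono
      rintro _ ⟨d, rfl⟩
      exact ⟨d, rfl⟩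
    · rw [Subgroup.closure_le]
      rintro _ ⟨j, rfl⟩
      by_cases hj : j ∈ D
      · exact Subgroup.subset_closure ⟨⟨j, hj⟩, rfl⟩
      · rw [hD2 j hj]; exact Subgroup.one_mem _
  have hg : h kk ∈ Subgroup.closure (Set.range (mixFam x h (k + 1))) := by
    have h1 : stage x (k + 1) ≤ Subgroup.closure (Set.range (mixFam x h (k + 1))) := by
      apply Subgroup.closure_mono
      rintro _ ⟨j, hj, rfl⟩
      have hj' : (j : ℕ) < k + 1 := hj
      exact ⟨j, by simp [mixFam, hj']⟩
    exact h1 (hh kk)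
  have hne : ∀ j, j ≠ kk → mixFam x h k j = mixFam x h (k + 1) j := by
    intro j hj
    have : (j : ℕ) ≠ k := fun h => hj (Fin.ext h)
    simp only [mixFam]
    by_cases h1 : (j : ℕ) < k
    · rw [if_pos h1, if_pos (by omega)]
    · rw [if_neg h1, if_neg (by omega)]
  have hkk : mixFam x h k kk = h kk := by simp [mixFam, kk]
  obtain ⟨φ, h1, h2⟩ := endo_exists _ hD3 _ hL ⟨kk, hkD⟩ (h kk) hg
  refine ⟨φ, h1, h2.trans ?_⟩
  have hupd : ∀ d : D, Function.update (fun d : D => mixFam x h (k + 1) d) ⟨kk, hkD⟩ (h kk) d =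
      mixFam x h k d := by
    intro d
    by_cases hd : d = ⟨kk, hkD⟩
    · rw [hd, Function.update_self, hkk]
    · rw [Function.update_of_ne hd, hne _ (fun h => hd (Subtype.ext h))]
  apply le_antisymm
  · apply Subgroup.closure_mono
    rintro _ ⟨d, rfl⟩
    exact ⟨d, (hupd d).symm⟩
  · rw [Subgroup.closure_le]
    rintro _ ⟨j, rfl⟩
    by_cases hj : j ∈ D
    · exact Subgroup.subset_closure ⟨⟨j, hj⟩, hupd _⟩
    · rw [hne j (by rintro rfl; exact hj hkD), hD2 j hj]; exact Subgroup.one_mem _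

/-- Every echelon subgroup of `F_n` is reached from `F_n` by a descending chain of at
most `n` steps, each step passing to the image of a 1-generator subgroup endomorphism. -/
theorem echelon_chain_of_oneGenEndos (n : ℕ) (H : Subgroup (FreeGroup (Fin n)))
    (hH : IsEchelon H) :
    ∃ m : ℕ, m ≤ n ∧ ∃ c : Fin (m + 1) → Subgroup (FreeGroup (Fin n)),
      c 0 = ⊤ ∧ c (Fin.last m) = H ∧
      ∀ k : Fin m, ∃ φ : ↥(c k.castSucc) →* ↥(c k.castSucc),
        IsOneGenEndo φ ∧ Subgroup.map (c k.castSucc).subtype φ.range = c k.succ := by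
  obtain ⟨x, hx, hE⟩ := hH
  have hmono : ∀ i, stage x i ≤ stage x (i + 1) := by
    intro i
    apply Subgroup.closure_mono
    apply Set.image_mono
    intro j hj
    have hj' : (j : ℕ) < i := hj
    show (j : ℕ) < i + 1
    omega
  have hst0 : stage x 0 = ⊥ := by simp [stage]
  have hstn : stage x n = ⊤ := by
    have : {j : Fin n | (j : ℕ) < n} = Set.univ := by ext j; simp
    rw [stage, this, Set.image_univ, ← FreeGroup.lift_surjective_iff_closure_range_eq_top]
    exact hx.2
  have hfin : ∀ i, i ≤ n → rk (H ⊓ stage x i) < Cardinal.aleph0 := by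
    intro i
    induction i with
    | zero =>
      intro _
      rw [hst0, inf_bot_eq]
      refine (rk_le Subgroup.closure_empty).trans_lt ?_
      rw [Cardinal.mk_emptyCollection]
      exact Cardinal.aleph0_pos
    | succ i ih =>
      intro hi
      exact (hE i hi).trans_lt (Cardinal.add_lt_aleph0 (ih (by omega)) Cardinal.one_lt_aleph0)
  have hex : ∀ j : Fin n, ∃ h, h ∈ stage x (j + 1) ∧ (h = 1 ∨ h ∉ stage x j) ∧
      H ⊓ stage x (j + 1) = (H ⊓ stage x j) ⊔ Subgroup.closure {h} := by
    intro j
    have hK : (H ⊓ stage x (j + 1)) ⊓ Subgroup.closure (x '' {i | (i : ℕ) < j}) =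
        H ⊓ stage x j := by
      show (H ⊓ stage x (j + 1)) ⊓ stage x j = _
      rw [inf_assoc, inf_eq_right.2 (hmono j)]
    obtain ⟨h, hh⟩ := step_gen x hx (H ⊓ stage x (j + 1)) {i | (i : ℕ) < j}
      (by rw [hK]; exact hfin j (by omega)) (by rw [hK]; exact hE j j.2)
    rw [hK] at hh
    have hmem : h ∈ H ⊓ stage x (j + 1) := by
      rw [hh]
      exact Subgroup.mem_sup_right (Subgroup.subset_closure rfl)
    by_cases hj : h ∈ stage x j
    · refine ⟨1, Subgroup.one_mem _, Or.inl rfl, ?_⟩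
      rw [hh]
      have : Subgroup.closure {h} ≤ H ⊓ stage x j := by
        rw [Subgroup.closure_le, Set.singleton_subset_iff]
        exact ⟨hmem.1, hj⟩
      rw [sup_eq_left.2 this]
      simp
    · exact ⟨h, hmem.2, Or.inr hj, hh⟩
  choose h hh1 hh2 hh3 using hex
  have hgen : ∀ i, i ≤ n → H ⊓ stage x i = Subgroup.closure (h '' {j | (j : ℕ) < i}) := by
    intro i
    induction i with
    | zero => intro _; rw [hst0]; simp
    | succ i ih =>
      intro hi
      have := hh3 ⟨i, hi⟩
      simp only at this
      rw [this, ih (by omega), ← Subgroup.closure_union]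
      congr 1
      ext z
      constructor
      · rintro (⟨j, hj, rfl⟩ | hz)
        · exact ⟨j, Nat.lt_succ_of_lt hj, rfl⟩
        · exact ⟨⟨i, hi⟩, Nat.lt_succ_self i, hz.symm⟩
      · rintro ⟨j, hj, rfl⟩
        rcases Nat.lt_succ_iff_lt_or_eq.1 hj with h1 | h1
        · exact Or.inl ⟨j, h1, rfl⟩
        · right
          have : j = ⟨i, hi⟩ := Fin.ext h1
          rw [this]; rfl
  refine ⟨n, le_rfl, fun i => Subgroup.closure (Set.range (mixFam x h (n - i))), ?_, ?_, ?_⟩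
  · have : mixFam x h (n - ((0 : Fin (n + 1)) : ℕ)) = x := by
      funext j; simp [mixFam]
    simp only [this]
    rw [← FreeGroup.lift_surjective_iff_closure_range_eq_top]
    exact hx.2
  · have : mixFam x h (n - ((Fin.last n : Fin (n + 1)) : ℕ)) = h := by
      funext j; simp [mixFam]
    simp only [this]
    have h1 := hgen n le_rfl
    rw [hstn, inf_top_eq] at h1
    rw [h1]
    congr 1
    ext z; simp
  · intro k
    obtain ⟨k', hk', h1, h2⟩ : ∃ k', k' < n ∧ n - (k.castSucc : ℕ) = k' + 1 ∧
        n - (k.succ : ℕ) = k' := by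
      refine ⟨n - k - 1, ?_, ?_, ?_⟩
      · omega
      · simp only [Fin.val_castSucc]; omega
      · simp only [Fin.val_succ]; omega
    have key : ∀ A B : Subgroup (FreeGroup (Fin n)),
        A = Subgroup.closure (Set.range (mixFam x h (k' + 1))) →
        B = Subgroup.closure (Set.range (mixFam x h k')) →
        ∃ φ : A →* A, IsOneGenEndo φ ∧ Subgroup.map A.subtype φ.range = B := by
      rintro A B rfl rfl
      exact mix_endo x h hx.1 hh1 hh2 k' hk'
    exact key _ _ (by simp only [h1]) (by simp only [h2])
end

section
/- Let F_n be the free group of finite rank n with ordered free basis (x_1, …, x_n) and set F_i = ⟨x_1, …, x_i⟩. A subgroup H ≤ F_n is in echelon form with respect to (x_1, …, x_n) if and only if H has a free ordered basis {y_{i_1}, …, y_{i_r}} with y_{i_j} ∈ F_{i_j} − F_{i_j − 1} for indices 1 ≤ i_1 < i_2 < ⋯ < i_r ≤ n. -/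
/-! ### A Schreier transversal adapted to a sub-basis -/

section FreeFactor

variable {ι : Type}

/-- Reachability of a coset from the base coset by a word of given length with letters in `Y`. -/
def ReachIn (H : Subgroup (FreeGroup ι)) (Y : Set ι) (s : FreeGroup ι ⧸ H) (m : ℕ) : Prop :=
  ∃ w : List (ι × Bool), w.length = m ∧ (∀ l ∈ w, l.1 ∈ Y) ∧
    FreeGroup.mk w • ((1 : FreeGroup ι) : FreeGroup ι ⧸ H) = s

lemma reachIn_parent (H : Subgroup (FreeGroup ι)) (Y : Set ι) (s : FreeGroup ι ⧸ H)
    (h : ∃ m, ReachIn H Y s m) (hs : s ≠ ((1 : FreeGroup ι) : FreeGroup ι ⧸ H)) :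
    ∃ (l : ι × Bool) (s' : FreeGroup ι ⧸ H), l.1 ∈ Y ∧ s = FreeGroup.mk [l] • s' ∧
      (∃ m, ReachIn H Y s' m) ∧ sInf {m | ReachIn H Y s' m} < sInf {m | ReachIn H Y s m} := by
  obtain ⟨w, hw, hY, hws⟩ := Nat.sInf_mem (s := {m | ReachIn H Y s m}) h
  cases w with
  | nil =>
    exfalso; apply hs
    rw [← hws, ← FreeGroup.one_eq_mk, one_smul]
  | cons l w =>
    have hr : ReachIn H Y (FreeGroup.mk w • ((1 : FreeGroup ι) : FreeGroup ι ⧸ H)) w.length :=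
      ⟨w, rfl, fun a ha => hY a (List.mem_cons_of_mem _ ha), rfl⟩
    refine ⟨l, _, hY l List.mem_cons_self, ?_, ⟨_, hr⟩, ?_⟩
    · rw [← hws, smul_smul, FreeGroup.mul_mk]; rfl
    · rw [← hw, List.length_cons]
      exact Nat.lt_succ_of_le (Nat.sInf_le hr)

lemma mk_mem_closure (Y : Set ι) (w : List (ι × Bool)) (h : ∀ l ∈ w, l.1 ∈ Y) :
    FreeGroup.mk w ∈ Subgroup.closure (FreeGroup.of '' Y) := by
  induction w with
  | nil => rw [← FreeGroup.one_eq_mk]; exact one_mem _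
  | cons l w ih =>
    have : FreeGroup.mk (l :: w) = FreeGroup.mk [l] * FreeGroup.mk w := by
      rw [FreeGroup.mul_mk]; rfl
    rw [this]
    refine mul_mem ?_ (ih fun a ha => h a (List.mem_cons_of_mem _ ha))
    have hl : FreeGroup.of l.1 ∈ Subgroup.closure (FreeGroup.of '' Y) :=
      Subgroup.subset_closure ⟨_, h l List.mem_cons_self, rfl⟩
    rcases l with ⟨i, b⟩
    cases b
    · have : FreeGroup.mk [(i, false)] = (FreeGroup.of i)⁻¹ := rfl
      rw [this]; exact inv_mem hl
    · exact hl

lemma exists_word (Y : Set ι) (g : FreeGroup ι)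
    (hg : g ∈ Subgroup.closure (FreeGroup.of '' Y)) :
    ∃ w : List (ι × Bool), (∀ l ∈ w, l.1 ∈ Y) ∧ FreeGroup.mk w = g := by
  induction hg using Subgroup.closure_induction with
  | mem x hx =>
    obtain ⟨i, hi, rfl⟩ := hx
    exact ⟨[(i, true)], by simpa using hi, rfl⟩
  | one => exact ⟨[], by simp, rfl⟩
  | mul x y _ _ hx hy =>
    obtain ⟨w, hw, rfl⟩ := hx
    obtain ⟨v, hv, rfl⟩ := hy
    refine ⟨w ++ v, ?_, FreeGroup.mul_mk.symm⟩
    intro l hl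
    rcases List.mem_append.1 hl with h | h
    · exact hw l h
    · exact hv l h
  | inv x _ hx =>
    obtain ⟨w, hw, rfl⟩ := hx
    refine ⟨FreeGroup.invRev w, ?_, FreeGroup.inv_mk.symm⟩
    intro l hl
    simp only [FreeGroup.invRev, List.mem_reverse, List.mem_map] at hl
    obtain ⟨a, ha, rfl⟩ := hl
    exact hw a ha

open Classical in
/-- The cost used to build the tree: cosets in the `Y`-component come first. -/
noncomputable def cosetCost (H : Subgroup (FreeGroup ι)) (Y : Set ι) (s : FreeGroup ι ⧸ H) :
    ℕ × ℕ :=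
  if ∃ m, ReachIn H Y s m then (0, sInf {m | ReachIn H Y s m})
  else (1, sInf {m | ReachIn H Set.univ s m})

lemma exists_parent (H : Subgroup (FreeGroup ι)) (Y : Set ι) (s : FreeGroup ι ⧸ H)
    (hs : s ≠ ((1 : FreeGroup ι) : FreeGroup ι ⧸ H)) :
    ∃ p : (ι × Bool) × (FreeGroup ι ⧸ H), s = FreeGroup.mk [p.1] • p.2 ∧
      Prod.Lex (· < ·) (· < ·) (cosetCost H Y p.2) (cosetCost H Y s) ∧
      ((∃ m, ReachIn H Y s m) → p.1.1 ∈ Y ∧ ∃ m, ReachIn H Y p.2 m) := by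
  classical
  by_cases h : ∃ m, ReachIn H Y s m
  · obtain ⟨l, s', hl, hss, hr, hlt⟩ := reachIn_parent H Y s h hs
    refine ⟨(l, s'), hss, ?_, fun _ => ⟨hl, hr⟩⟩
    simp only [cosetCost, if_pos h, if_pos hr]
    exact Prod.Lex.right _ hlt
  · have hu : ∃ m, ReachIn H Set.univ s m := by
      obtain ⟨g, rfl⟩ := QuotientGroup.mk_surjective s
      obtain ⟨w, rfl⟩ : ∃ w, FreeGroup.mk w = g := ⟨g.toWord, FreeGroup.mk_toWord⟩
      refine ⟨_, w, rfl, by simp, ?_⟩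
      rw [MulAction.Quotient.smul_coe, smul_eq_mul, mul_one]
    obtain ⟨l, s', -, hss, hr, hlt⟩ := reachIn_parent H Set.univ s hu hs
    refine ⟨(l, s'), hss, ?_, fun h' => absurd h' h⟩
    by_cases h' : ∃ m, ReachIn H Y s' m
    · simp only [cosetCost, if_neg h, if_pos h']
      exact Prod.Lex.left _ _ Nat.zero_lt_one
    · simp only [cosetCost, if_neg h, if_neg h']
      exact Prod.Lex.right _ hlt

lemma exists_transversal (H : Subgroup (FreeGroup ι)) (Y : Set ι) :
    ∃ t : FreeGroup ι ⧸ H → FreeGroup ι,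
      t ((1 : FreeGroup ι) : FreeGroup ι ⧸ H) = 1 ∧
      (∀ s, t s • ((1 : FreeGroup ι) : FreeGroup ι ⧸ H) = s) ∧
      (∀ s, (∃ m, ReachIn H Y s m) → t s ∈ Subgroup.closure (FreeGroup.of '' Y)) ∧
      (∀ P : FreeGroup ι ⧸ H → Prop, P ((1 : FreeGroup ι) : FreeGroup ι ⧸ H) →
        (∀ s i, P s → t (FreeGroup.of i • s) = FreeGroup.of i * t s → P (FreeGroup.of i • s)) →
        (∀ s i, P (FreeGroup.of i • s) → t (FreeGroup.of i • s) = FreeGroup.of i * t s → P s) →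
        ∀ s, P s) := by
  classical
  set s0 : FreeGroup ι ⧸ H := ((1 : FreeGroup ι) : FreeGroup ι ⧸ H) with hs0
  have wf : WellFounded (fun a b : FreeGroup ι ⧸ H =>
      Prod.Lex (· < ·) (· < ·) (cosetCost H Y a) (cosetCost H Y b)) :=
    InvImage.wf (cosetCost H Y) (WellFounded.prod_lex Nat.lt_wfRel.wf Nat.lt_wfRel.wf)
  choose p hp1 hp2 hp3 using exists_parent H Y
  let t : FreeGroup ι ⧸ H → FreeGroup ι := wf.fix (fun s rec =>
    if h : s = s0 then 1 else FreeGroup.mk [(p s h).1] * rec (p s h).2 (hp2 s h))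
  have ht : ∀ s, t s = if h : s = s0 then 1 else FreeGroup.mk [(p s h).1] * t (p s h).2 :=
    fun s => wf.fix_eq _ s
  have ht1 : t s0 = 1 := by rw [ht, dif_pos rfl]
  have ht2 : ∀ s (h : s ≠ s0), t s = FreeGroup.mk [(p s h).1] * t (p s h).2 := by
    intro s h; rw [ht s, dif_neg h]
  refine ⟨t, ht1, ?_, ?_, ?_⟩
  · intro s
    induction s using wf.induction with
    | _ s ih =>
      by_cases h : s = s0
      · rw [h, ht1, one_smul]
      · rw [ht2 s h, mul_smul, ih _ (hp2 s h)]
        exact (hp1 s h).symm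
  · intro s
    induction s using wf.induction with
    | _ s ih =>
      intro hr
      by_cases h : s = s0
      · rw [h, ht1]; exact one_mem _
      · rw [ht2 s h]
        refine mul_mem (mk_mem_closure Y _ ?_) (ih _ (hp2 s h) (hp3 s h hr).2)
        intro l hl
        rw [List.mem_singleton] at hl
        rw [hl]; exact (hp3 s h hr).1
  · intro P h0 h1 h2 s
    induction s using wf.induction with
    | _ s ih =>
      by_cases h : s = s0
      · rw [h]; exact h0
      · have e1 := hp1 s h
        have e2 := ht2 s h
        have e3 := ih _ (hp2 s h)
        generalize p s h = q at e1 e2 e3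
        obtain ⟨⟨i, b⟩, s'⟩ := q
        simp only at e1 e2 e3
        cases b
        · have hi : FreeGroup.mk [(i, false)] = (FreeGroup.of i)⁻¹ := rfl
          rw [hi] at e1 e2
          have e4 : FreeGroup.of i • s = s' := by rw [e1, smul_inv_smul]
          apply h2 s i
          · rw [e4]; exact e3
          · rw [e4, e2, mul_inv_cancel_left]
        · have hi : FreeGroup.mk [(i, true)] = FreeGroup.of i := rfl
          rw [hi] at e1 e2
          rw [e1]
          apply h1 s' i e3
          rw [← e1, e2]

/-- Nielsen–Schreier with control: `H ⊓ ⟨Y⟩` is a free factor of `H`. -/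
theorem free_factor_aux (H : Subgroup (FreeGroup ι)) (Y : Set ι) :
    ∃ (E : Type) (γ : E → FreeGroup ι) (EA : Set E),
      Function.Injective (FreeGroup.lift γ) ∧ (FreeGroup.lift γ).range = H ∧
      Subgroup.closure (γ '' EA) = H ⊓ Subgroup.closure (FreeGroup.of '' Y) := by
  classical
  obtain ⟨t, t1, t2, t3, t4⟩ := exists_transversal H Y
  set s0 : FreeGroup ι ⧸ H := ((1 : FreeGroup ι) : FreeGroup ι ⧸ H) with hs0
  set A := Subgroup.closure (FreeGroup.of '' Y) with hA
  let E := {p : ι × (FreeGroup ι ⧸ H) // t (FreeGroup.of p.1 • p.2) ≠ FreeGroup.of p.1 * t p.2}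
  let f : ι → (FreeGroup ι ⧸ H) → FreeGroup E := fun i s =>
    if h : t (FreeGroup.of i • s) ≠ FreeGroup.of i * t s then FreeGroup.of ⟨(i, s), h⟩ else 1
  let γ : E → FreeGroup ι := fun e =>
    (t (FreeGroup.of e.1.1 • e.1.2))⁻¹ * (FreeGroup.of e.1.1 * t e.1.2)
  let Φ : FreeGroup ι →* Equiv.Perm ((FreeGroup ι ⧸ H) × FreeGroup E) :=
    FreeGroup.lift (fun i =>
      { toFun := fun q => (FreeGroup.of i • q.1, f i q.1 * q.2)
        invFun := fun q => ((FreeGroup.of i)⁻¹ • q.1, (f i ((FreeGroup.of i)⁻¹ • q.1))⁻¹ * q.2)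
        left_inv := by intro q; simp
        right_inv := by intro q; simp })
  have hΦ : ∀ i q, Φ (FreeGroup.of i) q = (FreeGroup.of i • q.1, f i q.1 * q.2) := by
    intro i q; simp [Φ]
  have hΦ1 : ∀ g q, (Φ g q).1 = g • q.1 := by
    intro g
    induction g using FreeGroup.induction_on with
    | C1 => intro q; simp
    | of i => intro q; rw [hΦ]
    | inv_of i _ =>
      intro q
      have := hΦ i (Φ (FreeGroup.of i)⁻¹ q)
      rw [← Equiv.Perm.mul_apply, ← map_mul, mul_inv_cancel, map_one, Equiv.Perm.one_apply] at this
      rw [eq_inv_smul_iff]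
      exact (congrArg Prod.fst this).symm
    | mul x y hx hy => intro q; rw [map_mul, Equiv.Perm.mul_apply, hx, hy, mul_smul]
  have hf : ∀ i s, t (FreeGroup.of i • s) * FreeGroup.lift γ (f i s) = FreeGroup.of i * t s := by
    intro i s
    by_cases h : t (FreeGroup.of i • s) ≠ FreeGroup.of i * t s
    · simp only [f, dif_pos h, FreeGroup.lift_apply_of, γ, mul_inv_cancel_left]
    · simp only [f, dif_neg h, map_one, mul_one]
      exact not_not.1 h
  have hθ : ∀ g q, t (Φ g q).1 * FreeGroup.lift γ (Φ g q).2
      = g * (t q.1 * FreeGroup.lift γ q.2) := by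
    have hgen : ∀ i q, t (Φ (FreeGroup.of i) q).1 * FreeGroup.lift γ (Φ (FreeGroup.of i) q).2
      = FreeGroup.of i * (t q.1 * FreeGroup.lift γ q.2) := by
      intro i q
      rw [hΦ]; simp only [map_mul]
      rw [← mul_assoc, hf, mul_assoc]
    intro g
    induction g using FreeGroup.induction_on with
    | C1 => intro q; simp
    | of i => exact hgen i
    | inv_of i _ =>
      intro q
      have := hgen i (Φ (FreeGroup.of i)⁻¹ q)
      rw [← Equiv.Perm.mul_apply, ← map_mul, mul_inv_cancel, map_one, Equiv.Perm.one_apply] at this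
      rw [this, inv_mul_cancel_left]
    | mul x y hx hy => intro q; rw [map_mul, Equiv.Perm.mul_apply, hx, hy, mul_assoc]
  have htree : ∀ s, ∀ m, Φ (t s) (s0, m) = (s, m) := by
    have key : ∀ s i m, t (FreeGroup.of i • s) = FreeGroup.of i * t s →
        Φ (FreeGroup.of i) (s, m) = (FreeGroup.of i • s, m) := by
      intro s i m h
      rw [hΦ]
      have : f i s = 1 := dif_neg (not_not.2 h)
      rw [this, one_mul]
    apply t4
    · intro m; rw [t1]; simp
    · intro s i ih h m
      rw [h, map_mul, Equiv.Perm.mul_apply, ih, key s i m h]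
    · intro s i ih h m
      have := ih m
      rw [h, map_mul, Equiv.Perm.mul_apply, ← key s i m h] at this
      exact (Φ (FreeGroup.of i)).injective this
  have hγΦ : ∀ e m, Φ (γ e) (s0, m) = (s0, FreeGroup.of e * m) := by
    intro e m
    have : Φ (FreeGroup.of e.1.1) (e.1.2, m)
        = (FreeGroup.of e.1.1 • e.1.2, FreeGroup.of e * m) := by
      rw [hΦ]
      have : f e.1.1 e.1.2 = FreeGroup.of e := dif_pos e.2
      rw [this]
    simp only [γ, map_mul, Equiv.Perm.mul_apply]
    rw [htree, this, map_inv, Equiv.Perm.inv_eq_iff_eq, htree]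
  have hΓ : ∀ k m, Φ (FreeGroup.lift γ k) (s0, m) = (s0, k * m) := by
    intro k
    induction k using FreeGroup.induction_on with
    | C1 => intro m; simp
    | of e => intro m; rw [FreeGroup.lift_apply_of, hγΦ]
    | inv_of e _ =>
      intro m
      rw [map_inv, FreeGroup.lift_apply_of, map_inv, Equiv.Perm.inv_eq_iff_eq, hγΦ,
        mul_inv_cancel_left]
    | mul x y hx hy => intro m; rw [map_mul, map_mul, Equiv.Perm.mul_apply, hy, hx, mul_assoc]
  have hH : ∀ g, g ∈ H ↔ g • s0 = s0 := by
    intro g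
    rw [hs0, MulAction.Quotient.smul_coe, smul_eq_mul, mul_one, eq_comm, QuotientGroup.eq]
    simp
  have hγH : ∀ e, γ e ∈ H := by
    intro e
    rw [hH, ← hΦ1 _ (s0, 1), hγΦ]
  have hrep : ∀ h ∈ H, FreeGroup.lift γ (Φ h (s0, 1)).2 = h := by
    intro h hh
    have := hθ h (s0, 1)
    rw [hΦ1, (hH h).1 hh] at this
    simpa [t1] using this
  -- orbit of the base coset under `A`
  let O : Set (FreeGroup ι ⧸ H) := {s | ∃ a ∈ A, a • s0 = s}
  have hO : ∀ a ∈ A, ∀ s, a • s ∈ O ↔ s ∈ O := by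
    intro a ha s
    constructor
    · rintro ⟨b, hb, hbs⟩
      exact ⟨a⁻¹ * b, mul_mem (inv_mem ha) hb, by rw [mul_smul, hbs, inv_smul_smul]⟩
    · rintro ⟨b, hb, hbs⟩
      exact ⟨a * b, mul_mem ha hb, by rw [mul_smul, hbs]⟩
  have htO : ∀ s ∈ O, t s ∈ A := by
    rintro s ⟨a, ha, rfl⟩
    obtain ⟨w, hw, rfl⟩ := exists_word Y a ha
    exact t3 _ ⟨_, w, rfl, hw, rfl⟩
  have hgA : ∀ i ∈ Y, FreeGroup.of i ∈ A := fun i hi => Subgroup.subset_closure ⟨i, hi, rfl⟩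
  let EA : Set E := {e | e.1.1 ∈ Y ∧ e.1.2 ∈ O}
  refine ⟨E, γ, EA, ?_, ?_, le_antisymm ?_ ?_⟩
  · intro k l hkl
    have h1 := hΓ k 1
    rw [hkl, hΓ l 1] at h1
    simpa using (congrArg Prod.snd h1).symm
  · apply le_antisymm
    · rintro _ ⟨k, rfl⟩
      rw [hH, ← hΦ1 _ (s0, 1), hΓ]
    · intro h hh
      exact ⟨_, hrep h hh⟩
  · rw [Subgroup.closure_le]
    rintro _ ⟨e, ⟨h1, h2⟩, rfl⟩
    exact ⟨hγH e, A.mul_mem (A.inv_mem (htO _ ((hO _ (hgA _ h1) _).2 h2)))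
      (A.mul_mem (hgA _ h1) (htO _ h2))⟩
  · rintro h ⟨hh, ha⟩
    let C := Subgroup.closure (FreeGroup.of '' EA)
    have hQ : ∀ g ∈ A, ∀ q, ((Φ g q).1 ∈ O ∧ (Φ g q).2 ∈ C) ↔ (q.1 ∈ O ∧ q.2 ∈ C) := by
      intro g hg
      induction hg using Subgroup.closure_induction with
      | mem x hx =>
        obtain ⟨i, hi, rfl⟩ := hx
        intro q
        rw [hΦ]
        simp only [hO _ (hgA i hi)]
        refine and_congr_right fun hq => ?_
        apply Subgroup.mul_mem_cancel_left
        by_cases h : t (FreeGroup.of i • q.1) ≠ FreeGroup.of i * t q.1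
        · simp only [f, dif_pos h]
          exact Subgroup.subset_closure ⟨_, ⟨hi, hq⟩, rfl⟩
        · simp only [f, dif_neg h]
          exact one_mem _
      | one => intro q; simp
      | mul x y _ _ hx hy => intro q; rw [map_mul, Equiv.Perm.mul_apply, hx, hy]
      | inv x _ hx =>
        intro q
        have := hx (Φ x⁻¹ q)
        rw [← Equiv.Perm.mul_apply, ← map_mul, mul_inv_cancel, map_one,
          Equiv.Perm.one_apply] at this
        exact this.symm
    have h1 := ((hQ h ha (s0, 1)).2 ⟨⟨1, one_mem _, one_smul _ _⟩, one_mem _⟩).2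
    rw [← hrep h hh]
    have h2 : FreeGroup.lift γ (Φ h (s0, 1)).2 ∈ C.map (FreeGroup.lift γ) := ⟨_, h1, rfl⟩
    rw [MonoidHom.map_closure, Set.image_image] at h2
    simpa using h2

lemma lift_range_closure {G : Type} [Group G] (b : ι → G) :
    (FreeGroup.lift b).range = Subgroup.closure (Set.range b) :=
  FreeGroup.range_lift_eq_closure

/-- Free factor theorem for a free family `b` in any group. -/
theorem free_factor_s5 {G : Type} [Group G] (b : ι → G) (hb : Function.Injective (FreeGroup.lift b))
    (H : Subgroup G) (hH : H ≤ (FreeGroup.lift b).range) (Y : Set ι) :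
    ∃ (E : Type) (γ : E → G) (EA : Set E),
      Function.Injective (FreeGroup.lift γ) ∧ (FreeGroup.lift γ).range = H ∧
      Subgroup.closure (γ '' EA) = H ⊓ Subgroup.closure (b '' Y) := by
  obtain ⟨E, γ, EA, h1, h2, h3⟩ := free_factor_aux (H.comap (FreeGroup.lift b)) Y
  have hcomp : FreeGroup.lift (fun e => FreeGroup.lift b (γ e))
      = (FreeGroup.lift b).comp (FreeGroup.lift γ) := by
    ext e; simp
  refine ⟨E, fun e => FreeGroup.lift b (γ e), EA, ?_, ?_, ?_⟩
  · rw [hcomp]; exact hb.comp h1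
  · rw [hcomp, MonoidHom.range_comp, h2, Subgroup.map_comap_eq, inf_eq_right.2 hH]
  · have := congrArg (Subgroup.map (FreeGroup.lift b)) h3
    rw [MonoidHom.map_closure, Subgroup.map_inf _ _ _ hb, Subgroup.map_comap_eq,
      inf_eq_right.2 hH, MonoidHom.map_closure, Set.image_image, Set.image_image] at this
    simpa using this

/-! ### Ranks -/

/-- The rank of a free group on `ι`. -/
theorem rk_range_lift {G : Type} [Group G] (b : ι → G)
    (hb : Function.Injective (FreeGroup.lift b)) :
    rk (FreeGroup.lift b).range = Cardinal.mk ι := by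
  have hbi : Function.Injective b := by
    intro i j h
    apply FreeGroup.of_injective
    apply hb
    simpa using h
  apply le_antisymm
  · refine (ciInf_le' _ ⟨Set.range b, (lift_range_closure b).symm⟩).trans ?_
    exact Cardinal.mk_range_le
  · haveI : Nonempty {S : Set G // Subgroup.closure S = (FreeGroup.lift b).range} :=
      ⟨⟨Set.range b, (lift_range_closure b).symm⟩⟩
    apply le_ciInf
    rintro ⟨S, hS⟩
    -- pull back to the free group, then map to `ι →₀ ℚ`
    let TT : Set (FreeGroup ι) := FreeGroup.lift b ⁻¹' S
    have hSS : FreeGroup.lift b '' TT = S := by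
      rw [Set.image_preimage_eq_iff, ← MonoidHom.coe_range, ← hS]
      exact Subgroup.subset_closure
    have hcl : Subgroup.closure TT = ⊤ := by
      apply Subgroup.map_injective hb
      rw [MonoidHom.map_closure, hSS, hS, MonoidHom.range_eq_map]
    have hcard : Cardinal.mk TT = Cardinal.mk S := by
      rw [← hSS]; exact (Cardinal.mk_image_eq hb).symm
    rw [← hcard]
    let ψ : FreeGroup ι →* Multiplicative (ι →₀ ℚ) :=
      FreeGroup.lift (fun i => Multiplicative.ofAdd (Finsupp.single i 1))
    let v : FreeGroup ι → (ι →₀ ℚ) := fun g => Multiplicative.toAdd (ψ g)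
    have hmem : ∀ g, v g ∈ Submodule.span ℚ (v '' TT) := by
      intro g
      have hg : g ∈ Subgroup.closure TT := by rw [hcl]; trivial
      induction hg using Subgroup.closure_induction with
      | mem x hx => exact Submodule.subset_span ⟨x, hx, rfl⟩
      | one => simp [v]
      | mul x y _ _ hx hy =>
        have : v (x * y) = v x + v y := by simp [v]
        rw [this]; exact add_mem hx hy
      | inv x _ hx =>
        have : v x⁻¹ = - v x := by simp [v]
        rw [this]; exact neg_mem hx
    have hspan : Submodule.span ℚ (v '' TT) = ⊤ := by
      rw [eq_top_iff, ← Finsupp.basisSingleOne.span_eq, Submodule.span_le]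
      rintro _ ⟨i, rfl⟩
      have := hmem (FreeGroup.of i)
      simpa [v, ψ] using this
    have h1 := rank_span_le (R := ℚ) (v '' TT)
    rw [hspan, rank_top, rank_finsupp_self'] at h1
    exact h1.trans Cardinal.mk_image_le

lemma rk_closure_image {G : Type} [Group G] (b : ι → G)
    (hb : Function.Injective (FreeGroup.lift b)) (Y : Set ι) :
    rk (Subgroup.closure (b '' Y)) = Cardinal.mk Y := by
  have : FreeGroup.lift (fun i : Y => b i)
      = (FreeGroup.lift b).comp (FreeGroup.map (Subtype.val : Y → ι)) := by
    ext e; simp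
  rw [← rk_range_lift (fun i : Y => b i), lift_range_closure]
  · congr 2
    ext g; simp
  · rw [this]
    exact hb.comp (FreeGroup.map_injective Subtype.val_injective)

lemma not_mem_closure {G : Type} [Group G] (b : ι → G)
    (hb : Function.Injective (FreeGroup.lift b)) (Y : Set ι) (i : ι)
    (h : b i ∈ Subgroup.closure (b '' Y)) : i ∈ Y := by
  classical
  by_contra hi
  let ψ : FreeGroup ι →* Multiplicative ℤ :=
    FreeGroup.lift (fun j => if j = i then Multiplicative.ofAdd 1 else 1)
  have h1 : b '' Y = FreeGroup.lift b '' (FreeGroup.of '' Y) := by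
    rw [Set.image_image]; simp
  rw [h1, ← MonoidHom.map_closure] at h
  obtain ⟨g, hg, hgi⟩ := h
  have : g = FreeGroup.of i := by apply hb; rw [hgi]; simp
  subst this
  have h2 : Subgroup.closure (FreeGroup.of '' Y) ≤ ψ.ker := by
    rw [Subgroup.closure_le]
    rintro _ ⟨j, hj, rfl⟩
    have : j ≠ i := by rintro rfl; exact hi hj
    simp [ψ, MonoidHom.mem_ker, this]
  have h3 := h2 hg
  simp [ψ, MonoidHom.mem_ker] at h3

/-- Rank monotonicity along free factors, with strictness. -/
lemma rk_inf_le {G : Type} [Group G] (b : ι → G) (hb : Function.Injective (FreeGroup.lift b))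
    (H : Subgroup G) (hH : H ≤ (FreeGroup.lift b).range) (Y : Set ι) :
    rk (H ⊓ Subgroup.closure (b '' Y)) ≤ rk H ∧
      (rk H < Cardinal.aleph0 → rk H ≤ rk (H ⊓ Subgroup.closure (b '' Y)) →
        H ≤ Subgroup.closure (b '' Y)) := by
  obtain ⟨E, γ, EA, h1, h2, h3⟩ := free_factor_s5 b hb H hH Y
  rw [← h3, rk_closure_image γ h1, ← h2, rk_range_lift γ h1]
  refine ⟨Cardinal.mk_set_le EA, fun hfin hle => ?_⟩
  haveI : Finite E := Cardinal.mk_lt_aleph0_iff.1 hfin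
  have hEA : EA = Set.univ := by
    apply Set.eq_of_subset_of_ncard_le (Set.subset_univ _) _ (Set.toFinite _)
    rw [Set.ncard_univ, ← Nat.card_coe_set_eq]
    exact Cardinal.toNat_le_toNat hle (Cardinal.mk_lt_aleph0_iff.2 inferInstance)
  rw [lift_range_closure, ← Set.image_univ, ← hEA, h3]
  exact inf_le_right

end FreeFactor

/-! ### Extending bases by one element -/

lemma stage_mono {n : ℕ} {F : Type*} [Group F] (x : Fin n → F) {i j : ℕ} (h : i ≤ j) :
    stage x i ≤ stage x j :=
  Subgroup.closure_mono (Set.image_mono fun _ hk => lt_of_lt_of_le hk h)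

lemma stage_top {n : ℕ} (x : Fin n → FreeGroup (Fin n)) (hx : IsOrderedBasis x) :
    stage x n = ⊤ := by
  have : {j : Fin n | (j : ℕ) < n} = Set.univ := by ext j; simp
  rw [stage, this, Set.image_univ, ← lift_range_closure, MonoidHom.range_eq_top]
  exact hx.2

lemma snoc_injective {G : Type} [Group G] {E : Type} (γ : E → G)
    (hγ : Function.Injective (FreeGroup.lift γ)) (EA : Set E) (e : E) (he : e ∉ EA)
    {r : ℕ} (y : Fin r → G) (hy : Function.Injective (FreeGroup.lift y))
    (hr : (FreeGroup.lift y).range = Subgroup.closure (γ '' EA)) :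
    Function.Injective (FreeGroup.lift (Fin.snoc y (γ e) : Fin (r + 1) → G)) := by
  classical
  -- word in `y` representing `γ e'`
  have hw : ∀ e' : E, ∃ w : FreeGroup (Fin r), e' ∈ EA → FreeGroup.lift y w = γ e' := by
    intro e'
    by_cases h : e' ∈ EA
    · have : γ e' ∈ (FreeGroup.lift y).range := by
        rw [hr]; exact Subgroup.subset_closure ⟨e', h, rfl⟩
      obtain ⟨w, hw⟩ := this
      exact ⟨w, fun _ => hw⟩
    · exact ⟨1, fun h' => absurd h' h⟩
  choose w hw using hw
  let inc : FreeGroup (Fin r) →* FreeGroup (Fin (r + 1)) := FreeGroup.map Fin.castSucc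
  let ψ : FreeGroup E →* FreeGroup (Fin (r + 1)) :=
    FreeGroup.lift (fun e' => if e' ∈ EA then inc (w e') else FreeGroup.of (Fin.last r))
  -- for `k ∈ ⟨EA⟩` and `v` with `lift γ k = lift y v`, we have `ψ k = inc v`
  have key : ∀ k ∈ Subgroup.closure (FreeGroup.of '' EA), ∃ v, FreeGroup.lift γ k
      = FreeGroup.lift y v ∧ ψ k = inc v := by
    intro k hk
    induction hk using Subgroup.closure_induction with
    | mem a ha =>
      obtain ⟨e', he', rfl⟩ := ha
      exact ⟨w e', by rw [hw e' he']; simp, by simp [ψ, he']⟩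
    | one => exact ⟨1, by simp, by simp⟩
    | mul a b _ _ ha hb =>
      obtain ⟨v, h1, h2⟩ := ha
      obtain ⟨u, h3, h4⟩ := hb
      exact ⟨v * u, by simp only [map_mul, h1, h3], by simp only [map_mul, h2, h4]⟩
    | inv a _ ha =>
      obtain ⟨v, h1, h2⟩ := ha
      exact ⟨v⁻¹, by simp only [map_inv, h1], by simp only [map_inv, h2]⟩
  have hyk : ∀ j, ∃ k, FreeGroup.lift γ k = y j ∧ ψ k = FreeGroup.of (Fin.castSucc j) := by
    intro j
    have h1 : y j ∈ Subgroup.closure (γ '' EA) := by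
      rw [← hr]; exact ⟨FreeGroup.of j, by simp⟩
    have h2 : γ '' EA = FreeGroup.lift γ '' (FreeGroup.of '' EA) := by
      rw [Set.image_image]; simp
    rw [h2, ← MonoidHom.map_closure] at h1
    obtain ⟨k, hk, hkj⟩ := h1
    obtain ⟨v, h3, h4⟩ := key k hk
    have : v = FreeGroup.of j := by
      apply hy; rw [← h3, hkj]; simp
    exact ⟨k, hkj, by rw [h4, this]; simp [inc]⟩
  choose k hk1 hk2 using hyk
  let back : FreeGroup (Fin (r + 1)) →* FreeGroup E :=
    FreeGroup.lift (Fin.snoc k (FreeGroup.of e) : Fin (r + 1) → FreeGroup E)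
  have hb1 : FreeGroup.lift (Fin.snoc y (γ e) : Fin (r + 1) → G)
      = (FreeGroup.lift γ).comp back := by
    ext j
    refine Fin.lastCases ?_ (fun j => ?_) j
    · simp [back]
    · simp [back, hk1]
  have hb2 : ψ.comp back = MonoidHom.id _ := by
    ext j
    refine Fin.lastCases ?_ (fun j => ?_) j
    · simp [back, ψ, he]
    · simp [back, hk2]
  have hb3 : Function.Injective back := by
    intro a b hab
    have := congrArg ψ hab
    rwa [← MonoidHom.comp_apply, ← MonoidHom.comp_apply, hb2] at this
  rw [hb1]
  exact hγ.comp hb3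

lemma echelon_forward (n : ℕ) (x : Fin n → FreeGroup (Fin n))
    (hx : IsOrderedBasis x) (H : Subgroup (FreeGroup (Fin n))) (hE : InEchelonForm x H) :
    ∀ i : ℕ, i ≤ n →
      ∃ (r : ℕ) (idx : Fin r → Fin n) (y : Fin r → FreeGroup (Fin n)),
        StrictMono idx ∧ (∀ j, (idx j : ℕ) < i) ∧
        (∀ j, y j ∈ stage x ((idx j : ℕ) + 1) ∧ y j ∉ stage x (idx j : ℕ)) ∧
        Function.Injective (FreeGroup.lift y) ∧ (FreeGroup.lift y).range = H ⊓ stage x i := by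
  intro i
  induction i with
  | zero =>
    intro _
    refine ⟨0, Fin.elim0, Fin.elim0, fun a => a.elim0, fun a => a.elim0, fun a => a.elim0,
      Function.injective_of_subsingleton _, ?_⟩
    rw [lift_range_closure]
    simp [stage]
  | succ i ih =>
    intro hi
    obtain ⟨r, idx, y, hmono, hlt, hmem, hinj, hrange⟩ := ih (by omega)
    obtain ⟨E, γ, EA, h1, h2, h3⟩ := free_factor_s5 x hx.1 (H ⊓ stage x (i + 1))
      (by rw [MonoidHom.range_eq_top.2 hx.2]; exact le_top) {j | (j : ℕ) < i}
    have h3' : Subgroup.closure (γ '' EA) = H ⊓ stage x i := by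
      rw [h3, inf_assoc]
      congr 1
      exact inf_eq_right.2 (stage_mono x (Nat.le_succ i))
    have hle := hE i (by omega)
    have hrA : Cardinal.mk EA = r := by
      rw [← rk_closure_image γ h1, h3', ← hrange, rk_range_lift y hinj, Cardinal.mk_fin]
    rw [← h2, rk_range_lift γ h1, ← h3', rk_closure_image γ h1, ← Cardinal.mk_sum_compl EA,
      hrA] at hle
    have hc : Cardinal.mk (EAᶜ : Set E) ≤ 1 := by
      rw [add_comm, add_comm (r : Cardinal)] at hle
      exact (Cardinal.add_le_add_iff_of_lt_aleph0 (Cardinal.natCast_lt_aleph0 (n := r))).1 hle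
    rw [Cardinal.le_one_iff_subsingleton] at hc
    by_cases hemp : ∃ e, e ∉ EA
    · obtain ⟨e, he⟩ := hemp
      have huniv : Set.range γ = γ '' EA ∪ {γ e} := by
        rw [← Set.image_univ, ← Set.image_singleton, ← Set.image_union]
        congr 1
        symm
        rw [Set.eq_univ_iff_forall]
        intro e'
        by_cases h : e' ∈ EA
        · exact Or.inl h
        · right
          have := hc.elim ⟨e', h⟩ ⟨e, he⟩
          exact congrArg Subtype.val this
      have hγe : γ e ∈ H ⊓ stage x (i + 1) := by
        rw [← h2]; exact ⟨FreeGroup.of e, by simp⟩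
      refine ⟨r + 1, Fin.snoc idx ⟨i, hi⟩, Fin.snoc y (γ e), ?_, ?_, ?_, ?_, ?_⟩
      · intro a b
        refine Fin.lastCases ?_ (fun b => ?_) b
        · refine Fin.lastCases ?_ (fun a => ?_) a
          · intro h; exact absurd h (lt_irrefl _)
          · intro _
            rw [Fin.snoc_castSucc, Fin.snoc_last]
            exact hlt a
        · refine Fin.lastCases ?_ (fun a => ?_) a
          · intro h
            exact absurd h (not_lt.2 (Fin.le_last _))
          · intro h
            rw [Fin.snoc_castSucc, Fin.snoc_castSucc]
            exact hmono h
      · intro j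
        refine Fin.lastCases ?_ (fun j => ?_) j
        · rw [Fin.snoc_last]; exact Nat.lt_succ_self i
        · rw [Fin.snoc_castSucc]; exact (hlt j).trans (Nat.lt_succ_self i)
      · intro j
        refine Fin.lastCases ?_ (fun j => ?_) j
        · rw [Fin.snoc_last, Fin.snoc_last]
          refine ⟨hγe.2, fun hbad => he ?_⟩
          apply not_mem_closure γ h1
          rw [h3']
          exact ⟨hγe.1, hbad⟩
        · rw [Fin.snoc_castSucc, Fin.snoc_castSucc]; exact hmem j
      · exact snoc_injective γ h1 EA e he y hinj (hrange.trans h3'.symm)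
      · rw [← h2, lift_range_closure, lift_range_closure, huniv, Subgroup.closure_union, h3',
          ← hrange, lift_range_closure, ← Subgroup.closure_union]
        congr 1
        ext g
        constructor
        · rintro ⟨j, rfl⟩
          refine Fin.lastCases ?_ (fun j => ?_) j
          · right; simp
          · left; simp
        · rintro (⟨j, rfl⟩ | h)
          · exact ⟨Fin.castSucc j, by simp⟩
          · exact ⟨Fin.last r, by rw [Fin.snoc_last]; exact h.symm⟩
    · refine ⟨r, idx, y, hmono, fun j => (hlt j).trans (Nat.lt_succ_self i), hmem, hinj, ?_⟩
      have : EA = Set.univ := by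
        rw [Set.eq_univ_iff_forall]; intro e; by_contra h; exact hemp ⟨e, h⟩
      rw [hrange, ← h3', this, Set.image_univ, ← lift_range_closure, h2]

lemma echelon_backward (n : ℕ) (x : Fin n → FreeGroup (Fin n))
    (hx : IsOrderedBasis x) (H : Subgroup (FreeGroup (Fin n)))
    (r : ℕ) (idx : Fin r → Fin n) (y : Fin r → FreeGroup (Fin n))
    (hmono : StrictMono idx)
    (hmem : ∀ j, y j ∈ stage x ((idx j : ℕ) + 1) ∧ y j ∉ stage x (idx j : ℕ))
    (hinj : Function.Injective (FreeGroup.lift y)) (hrange : (FreeGroup.lift y).range = H) :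
    InEchelonForm x H := by
  classical
  let a : ℕ → ℕ := fun i => Nat.card {j : Fin r | (idx j : ℕ) < i}
  have hyH : ∀ j, y j ∈ H := fun j => by rw [← hrange]; exact ⟨FreeGroup.of j, by simp⟩
  have hge : ∀ i, (a i : Cardinal) ≤ rk (H ⊓ stage x i) := by
    intro i
    have h := (rk_inf_le y hinj (H ⊓ stage x i) (by rw [hrange]; exact inf_le_left)
      {j : Fin r | (idx j : ℕ) < i}).1
    have hle : Subgroup.closure (y '' {j : Fin r | (idx j : ℕ) < i}) ≤ H ⊓ stage x i := by
      rw [Subgroup.closure_le]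
      rintro _ ⟨j, hj, rfl⟩
      exact ⟨hyH j, stage_mono x (Nat.succ_le_of_lt hj) (hmem j).1⟩
    rw [inf_eq_right.2 hle, rk_closure_image y hinj] at h
    have h' : (a i : Cardinal) = Cardinal.mk {j : Fin r | (idx j : ℕ) < i} := by
      simp only [a]; exact Nat.cast_card
    rw [h']; exact h
  have hstep : ∀ i, a (i + 1) ≤ a i + 1 ∧ ((∀ j, (idx j : ℕ) ≠ i) → a (i + 1) = a i) := by
    intro i
    constructor
    · simp only [a, Nat.card_coe_set_eq]
      by_cases h : ∃ j, (idx j : ℕ) = i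
      · obtain ⟨j, hj⟩ := h
        have : {k : Fin r | (idx k : ℕ) < i + 1} ⊆ insert j {k : Fin r | (idx k : ℕ) < i} := by
          intro k hk
          have hk' : (idx k : ℕ) < i + 1 := hk
          by_cases hki : (idx k : ℕ) < i
          · exact Or.inr hki
          · left
            apply hmono.injective
            apply Fin.ext
            omega
        exact (Set.ncard_le_ncard this (Set.toFinite _)).trans (Set.ncard_insert_le _ _)
      · have : {k : Fin r | (idx k : ℕ) < i + 1} ⊆ {k : Fin r | (idx k : ℕ) < i} := by
          intro k hk
          have hk' : (idx k : ℕ) < i + 1 := hk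
          have : (idx k : ℕ) ≠ i := fun h' => h ⟨k, h'⟩
          change (idx k : ℕ) < i
          omega
        exact (Set.ncard_le_ncard this (Set.toFinite _)).trans (Nat.le_succ _)
    · intro h
      have : {k : Fin r | (idx k : ℕ) < i + 1} = {k : Fin r | (idx k : ℕ) < i} := by
        ext k
        have := h k
        simp only [Set.mem_setOf_eq]
        omega
      simp only [a, this]
  have hle : ∀ d i, i + d = n → rk (H ⊓ stage x i) ≤ (a i : Cardinal) := by
    intro d
    induction d with
    | zero =>
      intro i hi
      have hin : i = n := by omega
      subst hin
      rw [stage_top x hx, inf_top_eq, ← hrange, rk_range_lift y hinj]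
      have : {j : Fin r | (idx j : ℕ) < i} = Set.univ := by ext j; simp
      simp only [a, this]
      simp
    | succ d ih =>
      intro i hi
      have h1 := ih (i + 1) (by omega)
      have h2 := rk_inf_le x hx.1 (H ⊓ stage x (i + 1))
        (by rw [MonoidHom.range_eq_top.2 hx.2]; exact le_top) {j | (j : ℕ) < i}
      have h3 : H ⊓ stage x (i + 1) ⊓ Subgroup.closure (x '' {j | (j : ℕ) < i})
          = H ⊓ stage x i := by
        rw [inf_assoc]
        congr 1
        exact inf_eq_right.2 (stage_mono x (Nat.le_succ i))
      rw [h3] at h2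
      by_cases h : ∃ j, (idx j : ℕ) = i
      · obtain ⟨j, hj⟩ := h
        have hlt : rk (H ⊓ stage x i) < rk (H ⊓ stage x (i + 1)) := by
          by_contra hn
          have h4 := h2.2 (h1.trans_lt (Cardinal.natCast_lt_aleph0)) (not_lt.1 hn)
          have h5 : y j ∈ stage x i := h4 ⟨hyH j, by have := (hmem j).1; rwa [hj] at this⟩
          have h6 := (hmem j).2
          rw [hj] at h6
          exact h6 h5
        have h7 := hlt.trans_le (h1.trans (Nat.cast_le.2 (hstep i).1))
        push_cast at h7
        rw [← Cardinal.succ_natCast] at h7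
        exact Order.lt_succ_iff.1 h7
      · rw [(hstep i).2 (fun j hj => h ⟨j, hj⟩)] at h1
        exact h2.1.trans h1
  intro i hi
  calc rk (H ⊓ stage x (i + 1)) ≤ (a (i + 1) : Cardinal) := hle (n - (i + 1)) (i + 1) (by omega)
    _ ≤ ((a i + 1 : ℕ) : Cardinal) := Nat.cast_le.2 (hstep i).1
    _ = (a i : Cardinal) + 1 := by push_cast; rfl
    _ ≤ rk (H ⊓ stage x i) + 1 := by gcongr; exact hge i

/-- `H ≤ F_n` is in echelon form with respect to an ordered basis `x` iff `H` has a free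
ordered basis `y_{i_1}, …, y_{i_r}` with `y_{i_j} ∈ F_{i_j} − F_{i_j − 1}` and
`i_1 < i_2 < ⋯ < i_r`. -/
theorem inEchelonForm_iff_basis (n : ℕ) (x : Fin n → FreeGroup (Fin n))
    (hx : IsOrderedBasis x) (H : Subgroup (FreeGroup (Fin n))) :
    InEchelonForm x H ↔
      ∃ (r : ℕ) (idx : Fin r → Fin n) (y : Fin r → FreeGroup (Fin n)),
        StrictMono idx ∧
        (∀ j, y j ∈ stage x ((idx j : ℕ) + 1) ∧ y j ∉ stage x (idx j : ℕ)) ∧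
        Function.Injective (FreeGroup.lift y) ∧ (FreeGroup.lift y).range = H := by
  constructor
  · intro hE
    obtain ⟨r, idx, y, h1, -, h2, h3, h4⟩ := echelon_forward n x hx H hE n le_rfl
    rw [stage_top x hx, inf_top_eq] at h4
    exact ⟨r, idx, y, h1, h2, h3, h4⟩
  · rintro ⟨r, idx, y, h1, h2, h3, h4⟩
    exact echelon_backward n x hx H r idx y h1 h2 h3 h4
end

section
/- Let F_n be the free group of finite rank n with ordered free basis (x_1, …, x_n), let F_i = ⟨x_1, …, x_i⟩, let H be a subgroup of F_n in echelon form with respect to (x_1, …, x_n), and let G be a subgroup with H ≤ G ≤ F_n. Then rk(G ∩ F_i) ≥ rk(H ∩ F_i) for every i = 0, …, n. -/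
theorem aux_resfin {α : Type} (w : FreeGroup α) (hw : w ≠ 1) :
    ∃ (X : Type) (_ : Finite X) (f : FreeGroup α →* Equiv.Perm X), f w ≠ 1 := by
  classical
  let X : Set (FreeGroup α) := {u | ∃ L' : List (α × Bool), L' <:+ w.toWord ∧ FreeGroup.mk L' = u}
  have hfin : X.Finite := by
    have : X = FreeGroup.mk '' {L' | L' ∈ w.toWord.tails} := by
      ext u; simp [X]
    rw [this]
    exact (List.finite_toSet _).image _
  have : Finite X := hfin
  have key : ∀ a : α, ∃ p : Equiv.Perm X, ∀ u v : X,
      FreeGroup.of a * (u : FreeGroup α) = v → p u = v := by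
    intro a
    have : Fintype X := Fintype.ofFinite X
    let e : {u : X // FreeGroup.of a * (u : FreeGroup α) ∈ X} ≃
        {v : X // (FreeGroup.of a)⁻¹ * (v : FreeGroup α) ∈ X} :=
      { toFun := fun u => ⟨⟨_, u.2⟩, by simp⟩
        invFun := fun v => ⟨⟨_, v.2⟩, by simp⟩
        left_inv := fun u => by ext; simp
        right_inv := fun u => by ext; simp }
    refine ⟨e.extendSubtype, fun u v h => ?_⟩
    have hu : FreeGroup.of a * (u : FreeGroup α) ∈ X := by rw [h]; exact v.2
    rw [Equiv.extendSubtype_apply_of_mem e u hu]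
    ext
    exact h
  choose p hp using key
  refine ⟨X, this, FreeGroup.lift p, fun h1 => hw ?_⟩
  have h0 : (1 : FreeGroup α) ∈ X := ⟨[], List.nil_suffix, rfl⟩
  have main : ∀ L' : List (α × Bool), L' <:+ w.toWord →
      ((FreeGroup.lift p (FreeGroup.mk L') ⟨1, h0⟩ : X) : FreeGroup α) = FreeGroup.mk L' := by
    intro L'
    induction L' with
    | nil => intro _; rw [← FreeGroup.one_eq_mk]; simp
    | cons c L' ih =>
      intro hs
      have hs' : L' <:+ w.toWord := (List.suffix_cons c L').trans hs
      have ih' := ih hs'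
      obtain ⟨a, b⟩ := c
      have hu : FreeGroup.lift p (FreeGroup.mk L') ⟨1, h0⟩ = (⟨FreeGroup.mk L', L', hs', rfl⟩ : X) :=
        Subtype.ext ih'
      have hsplit : FreeGroup.mk ((a, b) :: L') = FreeGroup.mk [(a, b)] * FreeGroup.mk L' := by
        rw [FreeGroup.mul_mk]; rfl
      have hX : FreeGroup.mk ((a, b) :: L') ∈ X := ⟨_, hs, rfl⟩
      conv_lhs => rw [hsplit]
      rw [map_mul, Equiv.Perm.mul_apply, hu]
      cases b with
      | true =>
        have := hp a ⟨FreeGroup.mk L', L', hs', rfl⟩ ⟨_, hX⟩ hsplit.symm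
        have e1 : FreeGroup.lift p (FreeGroup.mk [(a, true)]) = p a := by simp
        rw [e1, this]
      | false =>
        have hinv : FreeGroup.mk [(a, false)] = (FreeGroup.of a)⁻¹ := rfl
        have := hp a ⟨_, hX⟩ ⟨FreeGroup.mk L', L', hs', rfl⟩ (by
          change FreeGroup.of a * FreeGroup.mk ((a, false) :: L') = FreeGroup.mk L'
          rw [hsplit, hinv, mul_inv_cancel_left])
        have e1 : FreeGroup.lift p (FreeGroup.mk [(a, false)]) = (p a)⁻¹ := by simp
        rw [e1, Equiv.Perm.inv_eq_iff_eq.2 this.symm]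
  have := main w.toWord List.suffix_rfl
  rw [FreeGroup.mk_toWord, h1] at this
  exact this.symm

theorem aux_lift {n : ℕ} {F : Type} [Group F] {x : Fin n → F} (hx : IsOrderedBasis x)
    {P : Type} [Group P] (f : Fin n → P) : ∃ Φ : F →* P, ∀ j, Φ (x j) = f j := by
  let e : FreeGroup (Fin n) ≃* F := MulEquiv.ofBijective (FreeGroup.lift x) hx
  refine ⟨(FreeGroup.lift f).comp e.symm.toMonoidHom, fun j => ?_⟩
  have : e.symm (x j) = FreeGroup.of j := by
    rw [MulEquiv.symm_apply_eq]
    change x j = FreeGroup.lift x (FreeGroup.of j)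
    simp
  simp [this]

theorem aux_closure {n : ℕ} {F : Type} [Group F] {x : Fin n → F} (hx : IsOrderedBasis x) :
    Subgroup.closure (Set.range x) = ⊤ := by
  rw [← FreeGroup.range_lift_eq_closure]
  exact MonoidHom.range_eq_top.2 hx.2

/-- Intersections with partial-basis subgroups are retracts. -/
theorem aux_retract {n : ℕ} {F : Type} [Group F] {x : Fin n → F} (hx : IsOrderedBasis x)
    (I : Set (Fin n)) (G : Subgroup F) :
    ∃ ρ : G →* (G ⊓ Subgroup.closure (x '' I) : Subgroup F),
      ∀ (g : F) (hg : g ∈ G ⊓ Subgroup.closure (x '' I)), ρ ⟨g, hg.1⟩ = ⟨g, hg⟩ := by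
  classical
  set A := Subgroup.closure (x '' I) with hA
  set C : Subgroup F := G ⊓ A with hC
  let o : F ⧸ G := ((1 : F) : F ⧸ G)
  have ho : ∀ g : F, g • o = (g : F ⧸ G) := fun g => by
    change ((g * 1 : F) : F ⧸ G) = _; rw [mul_one]
  have hoG : ∀ g : F, g • o = o ↔ g ∈ G := fun g => by
    rw [ho, eq_comm, QuotientGroup.eq]; simp
  obtain ⟨t, ht1, ht⟩ : ∃ t : F ⧸ G → F, t o = 1 ∧
      ∀ a ∈ A, t (a • o) ∈ A ∧ t (a • o) • o = a • o := by
    refine ⟨fun y => if y = o then 1 else if h : ∃ a ∈ A, a • o = y then h.choose else 1,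
      by simp, fun a ha => ?_⟩
    by_cases h1 : a • o = o
    · simp [h1, A.one_mem]
    · have h : ∃ b ∈ A, b • o = a • o := ⟨a, ha, rfl⟩
      simp only [h1, if_false, h, dif_pos]
      exact h.choose_spec
  have hmem : ∀ a ∈ A, ∀ b ∈ A, (t (a • (b • o)))⁻¹ * a * t (b • o) ∈ C := by
    intro a ha b hb
    have h1 := ht b hb
    have h2 := ht (a * b) (A.mul_mem ha hb)
    rw [mul_smul] at h2
    refine ⟨?_, A.mul_mem (A.mul_mem (A.inv_mem h2.1) ha) h1.1⟩
    refine (hoG _).1 ?_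
    rw [mul_smul, mul_smul, h1.2, inv_smul_eq_iff, h2.2]
  let c : Fin n → F ⧸ G → C := fun j y =>
    if h : (t (x j • y))⁻¹ * x j * t y ∈ C then ⟨_, h⟩ else 1
  let σ : Fin n → Equiv.Perm ((F ⧸ G) × C) := fun j =>
    { toFun := fun p => (x j • p.1, c j p.1 * p.2)
      invFun := fun p => ((x j)⁻¹ • p.1, (c j ((x j)⁻¹ • p.1))⁻¹ * p.2)
      left_inv := fun p => by ext <;> simp
      right_inv := fun p => by ext <;> simp }
  obtain ⟨Φ, hΦ⟩ := aux_lift hx σ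
  have htop : ∀ g : F, g ∈ Subgroup.closure (Set.range x) := fun g => by
    rw [aux_closure hx]; trivial
  have hfst : ∀ g : F, ∀ p, (Φ g p).1 = g • p.1 := by
    intro g
    induction htop g using Subgroup.closure_induction with
    | mem _ h => obtain ⟨j, rfl⟩ := h; intro p; rw [hΦ]; rfl
    | one => intro p; simp
    | mul a b _ _ iha ihb => intro p; rw [map_mul, Equiv.Perm.mul_apply, iha, ihb, mul_smul]
    | inv a _ ih =>
      intro p
      rw [eq_inv_smul_iff, ← ih, ← Equiv.Perm.mul_apply, ← map_mul]; simp
  have hcomm : ∀ g : F, ∀ y z d, (Φ g (y, z * d)) = ((Φ g (y, z)).1, (Φ g (y, z)).2 * d) := by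
    intro g
    induction htop g using Subgroup.closure_induction with
    | mem _ h =>
      obtain ⟨j, rfl⟩ := h; intro y z d; rw [hΦ]
      change (x j • y, c j y * (z * d)) = (x j • y, c j y * z * d)
      rw [mul_assoc]
    | one => intro y z d; simp
    | mul a b _ _ iha ihb =>
      intro y z d; rw [map_mul, Equiv.Perm.mul_apply, ihb, iha, Equiv.Perm.mul_apply]
    | inv a _ ih =>
      intro y z d
      rw [map_inv, Equiv.Perm.inv_eq_iff_eq, ih]
      simp
  have hAact : ∀ a ∈ A, ∀ b ∈ A, ∀ z : C,
      ((Φ a (b • o, z)).2 : F) = (t (a • (b • o)))⁻¹ * a * t (b • o) * z := by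
    intro a ha
    induction ha using Subgroup.closure_induction with
    | mem _ h =>
      obtain ⟨j, hj, rfl⟩ := h
      intro b hb z
      have hh := hmem (x j) (Subgroup.subset_closure ⟨j, hj, rfl⟩) b hb
      rw [hΦ]
      change ((c j (b • o) * z : C) : F) = _
      simp only [c, dif_pos hh]
      rfl
    | one => intro b hb z; simp
    | mul a a' ha ha' iha iha' =>
      intro b hb z
      rw [map_mul, Equiv.Perm.mul_apply]
      have h1 : Φ a' (b • o, z) = ((a' * b) • o, (Φ a' (b • o, z)).2) := by
        ext1
        · rw [hfst, mul_smul]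
        · rfl
      rw [h1, iha _ (A.mul_mem ha' hb), iha' b hb, mul_smul, mul_smul]
      group
    | inv a ha ih =>
      intro b hb z
      have h1 : Φ a⁻¹ (b • o, z) = ((a⁻¹ * b) • o, (Φ a⁻¹ (b • o, z)).2) := by
        ext1
        · rw [hfst, mul_smul]
        · rfl
      have h2 := ih (a⁻¹ * b) (A.mul_mem (A.inv_mem ha) hb) (Φ a⁻¹ (b • o, z)).2
      rw [← h1, ← Equiv.Perm.mul_apply, ← map_mul, mul_inv_cancel, map_one, Equiv.Perm.one_apply,
        mul_smul, smul_inv_smul] at h2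
      simp only at h2
      rw [h2]
      group
  refine ⟨MonoidHom.mk' (fun g => (Φ g (o, 1)).2) ?_, ?_⟩
  · intro g h
    have h1 : Φ (h : F) (o, 1) = (o, 1 * (Φ (h : F) (o, 1)).2) := by
      ext1
      · rw [hfst]; exact (hoG _).2 h.2
      · simp
    change (Φ ((g : F) * h) (o, 1)).2 = _
    rw [map_mul, Equiv.Perm.mul_apply, h1, hcomm]
    simp
  · intro g hg
    apply Subtype.ext
    have h := hAact g hg.2 1 A.one_mem 1
    rw [one_smul, (hoG g).2 hg.1, ht1] at h
    simpa using h

theorem aux_rk_le {G : Type*} [Group G] {H : Subgroup G} {S : Set G}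
    (h : Subgroup.closure S = H) : rk H ≤ Cardinal.mk S :=
  ciInf_le' (fun S : {S : Set G // Subgroup.closure S = H} => Cardinal.mk S.1) ⟨S, h⟩

theorem aux_rk_exists {G : Type*} [Group G] (H : Subgroup G) :
    ∃ S : Set G, Subgroup.closure S = H ∧ rk H = Cardinal.mk S := by
  have : Nonempty {S : Set G // Subgroup.closure S = H} := ⟨⟨H, H.closure_eq⟩⟩
  obtain ⟨S, hS⟩ := ciInf_mem (fun S : {S : Set G // Subgroup.closure S = H} => Cardinal.mk S.1)
  exact ⟨S.1, S.2, hS.symm⟩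

/-- Rank bound from a surjection out of a family generating a subgroup (as a type). -/
theorem aux_rk_le_of_gen {G : Type} [Group G] (H : Subgroup G) {ι : Type} (f : ι → H)
    (hf : Subgroup.closure (Set.range f) = ⊤) : rk H ≤ Cardinal.mk ι := by
  refine (aux_rk_le (S := H.subtype '' Set.range f) ?_).trans ?_
  · rw [← MonoidHom.map_closure, hf, ← MonoidHom.range_eq_map, Subgroup.range_subtype]
  · exact Cardinal.mk_image_le.trans Cardinal.mk_range_le

/-- A minimal generating family of the subgroup, as a type. -/
theorem aux_gen_exists {G : Type} [Group G] (H : Subgroup G) :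
    ∃ (ι : Type) (f : ι → H), Subgroup.closure (Set.range f) = ⊤ ∧ rk H = Cardinal.mk ι := by
  obtain ⟨S, hS, hr⟩ := aux_rk_exists H
  have hSH : ∀ s ∈ S, s ∈ H := fun s hs => hS ▸ Subgroup.subset_closure hs
  refine ⟨S, fun s => ⟨s, hSH s s.2⟩, ?_, hr⟩
  apply Subgroup.map_injective H.subtype_injective
  rw [MonoidHom.map_closure, ← MonoidHom.range_eq_map, Subgroup.range_subtype, ← Set.range_comp]
  conv_rhs => rw [← hS]
  congr 1
  ext s; simp

theorem aux_rk_retract_le {F : Type} [Group F] {G C : Subgroup F} (ρ : G →* C)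
    (hρ : Function.Surjective ρ) : rk C ≤ rk G := by
  obtain ⟨ι, f, hf, hr⟩ := aux_gen_exists G
  rw [hr]
  refine aux_rk_le_of_gen C (ρ ∘ f) ?_
  rw [Set.range_comp, ← MonoidHom.map_closure, hf, ← MonoidHom.range_eq_map]
  exact MonoidHom.range_eq_top.2 hρ

/-- Hopfian-type argument. -/
theorem aux_hopf {α : Type} {G C : Subgroup (FreeGroup α)} (ρ : G →* C)
    (hρ : Function.Surjective ρ) (hfin : rk G < Cardinal.aleph0) (hle : rk G ≤ rk C) :
    Function.Injective ρ := by
  classical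
  obtain ⟨ι, f, hf, hr⟩ := aux_gen_exists G
  have hιf : Finite ι := by rw [← Cardinal.lt_aleph0_iff_finite, ← hr]; exact hfin
  let b := IsFreeGroup.basis C
  let κ := IsFreeGroup.Generators C
  have hbgen : Subgroup.closure (Set.range b) = ⊤ := by
    have : (Set.range b) = b.repr.symm.toMonoidHom '' Set.range (FreeGroup.of) := by
      rw [← Set.range_comp]; rfl
    rw [this, ← MonoidHom.map_closure, FreeGroup.closure_range_of, ← MonoidHom.range_eq_map]
    exact MonoidHom.range_eq_top.2 b.repr.symm.surjective
  have hκ : Cardinal.mk ι ≤ Cardinal.mk κ := hr ▸ hle.trans (aux_rk_le_of_gen C b hbgen)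
  obtain ⟨emb⟩ := hκ
  rw [injective_iff_map_eq_one]
  intro k hk
  by_contra hk1
  obtain ⟨X, hX, θ, hθ⟩ := aux_resfin (k : FreeGroup α) (fun h => hk1 (Subtype.ext h))
  let P := Equiv.Perm X
  have hP : Finite P := inferInstance
  -- restriction of functions to generators is injective
  let R : (G →* P) → (ι → P) := fun φ => φ ∘ f
  have hR : Function.Injective R := by
    intro φ ψ h
    refine MonoidHom.eq_of_eqOn_top (fun g _ => ?_)
    have : Set.EqOn φ ψ (Subgroup.closure (Set.range f)) :=
      MonoidHom.eqOn_closure (by rintro _ ⟨i, rfl⟩; exact congrFun h i)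
    exact this (by rw [hf]; trivial)
  have hfinG : Finite (G →* P) := Finite.of_injective R hR
  let E : (ι → P) → (G →* P) := fun v =>
    (b.lift (Function.extend emb v 1)).comp ρ
  have hE : Function.Injective E := by
    intro v w h
    have h1 : b.lift (Function.extend emb v 1) = b.lift (Function.extend emb w 1) :=
      (MonoidHom.cancel_right hρ).1 h
    have h2 := b.lift.injective h1
    funext i
    have := congrFun h2 (emb i)
    rwa [emb.injective.extend_apply, emb.injective.extend_apply] at this
  have hRE : Function.Injective (E ∘ R) := hE.comp hR
  have hsurj : Function.Surjective (E ∘ R) := Finite.injective_iff_surjective.1 hRE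
  obtain ⟨φ, hφ⟩ := hsurj (θ.comp G.subtype)
  apply hθ
  have := DFunLike.congr_fun hφ k
  simp only [Function.comp, E, MonoidHom.comp_apply, hk, map_one] at this
  exact this.symm

theorem aux_stage_mono {n : ℕ} {F : Type*} [Group F] (x : Fin n → F) (i : ℕ) :
    stage x i ≤ stage x (i + 1) :=
  Subgroup.closure_mono (Set.image_mono fun _ (h : _ < i) => Nat.lt_succ_of_lt h)

theorem aux_step {n : ℕ} {x : Fin n → FreeGroup (Fin n)} (hx : IsOrderedBasis x)
    (G : Subgroup (FreeGroup (Fin n))) (i : ℕ) :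
    rk (G ⊓ stage x i) ≤ rk (G ⊓ stage x (i + 1)) ∧
    (rk (G ⊓ stage x (i + 1)) < Cardinal.aleph0 → ¬ (G ⊓ stage x (i + 1) ≤ stage x i) →
      rk (G ⊓ stage x i) < rk (G ⊓ stage x (i + 1))) := by
  set K := G ⊓ stage x (i + 1) with hK
  have hKi : G ⊓ stage x i = K ⊓ stage x i := by
    rw [hK, inf_assoc, inf_eq_right.2 (aux_stage_mono x i)]
  rw [hKi]
  obtain ⟨ρ, hρ⟩ := aux_retract hx {j | (j : ℕ) < i} K
  change K →* (K ⊓ stage x i : Subgroup _) at ρ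
  have hs : Function.Surjective ρ := fun y => ⟨⟨y, y.2.1⟩, hρ y y.2⟩
  refine ⟨aux_rk_retract_le ρ hs, fun hfin hn => ?_⟩
  by_contra hlt
  have hinj := aux_hopf ρ hs hfin (not_lt.1 hlt)
  apply hn
  intro g hg
  have h1 : ρ ⟨ρ ⟨g, hg⟩, (ρ ⟨g, hg⟩).2.1⟩ = ρ ⟨g, hg⟩ := hρ _ (ρ ⟨g, hg⟩).2
  have h2 := congrArg Subtype.val (hinj h1)
  simp only at h2
  rw [← h2]
  exact (ρ ⟨g, hg⟩).2.2

/-- If `H` is in echelon form with respect to the ordered basis `x` and `H ≤ G ≤ F_n`,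
then `rk (H ⊓ F_i) ≤ rk (G ⊓ F_i)` for every `i = 0, …, n`. -/
theorem echelon_rank_stages_le (n : ℕ) (x : Fin n → FreeGroup (Fin n))
    (hx : IsOrderedBasis x) (H G : Subgroup (FreeGroup (Fin n)))
    (hE : InEchelonForm x H) (hHG : H ≤ G) :
    ∀ i : ℕ, i ≤ n → rk (H ⊓ stage x i) ≤ rk (G ⊓ stage x i) := by
  have hfin : ∀ i : ℕ, i ≤ n → rk (H ⊓ stage x i) < Cardinal.aleph0 := by
    intro i
    induction i with
    | zero =>
      intro _
      have : H ⊓ stage x 0 = ⊥ := by simp [stage]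
      rw [this]
      refine (aux_rk_le (S := ∅) (by simp)).trans_lt ?_
      simp [Cardinal.aleph0_pos]
    | succ i ih =>
      intro hi
      exact (hE i hi).trans_lt
        (Cardinal.add_lt_aleph0 (ih (by omega)) Cardinal.one_lt_aleph0)
  intro i
  induction i with
  | zero => intro _; simp [stage]
  | succ i ih =>
    intro hi
    have ih := ih (by omega)
    by_cases hG : rk (G ⊓ stage x (i + 1)) < Cardinal.aleph0
    · by_cases hH : H ⊓ stage x (i + 1) ≤ stage x i
      · have : H ⊓ stage x (i + 1) = H ⊓ stage x i :=
          le_antisymm (le_inf inf_le_left hH) (inf_le_inf_left _ (aux_stage_mono x i))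
        rw [this]
        exact ih.trans (aux_step hx G i).1
      · have h1 := (aux_step hx G i).2 hG
          (fun h => hH ((inf_le_inf_right _ hHG).trans h))
        refine (hE i hi).trans (le_trans ?_ ((Cardinal.add_one_le_succ _).trans (Order.succ_le_of_lt h1)))
        gcongr
    · exact (hfin _ hi).le.trans (not_lt.1 hG)
end

section
/- Let F_3 be the free group with free basis {x, y, z} and let H = ⟨x²y²x², y²z²y², z²x²y²x²z²⟩. Then H is inert in F_3: rk(H ∩ G) ≤ rk(G) for every finitely generated subgroup G of F_3. -/
/-- The generators of `F_3`. -/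
def xx : FreeGroup (Fin 3) := FreeGroup.of 0
def yy : FreeGroup (Fin 3) := FreeGroup.of 1
def zz : FreeGroup (Fin 3) := FreeGroup.of 2

/-- The subgroup `H = ⟨x²y²x², y²z²y², z²x²y²x²z²⟩` of `F_3`. -/
def Hex : Subgroup (FreeGroup (Fin 3)) :=
  Subgroup.closure {xx^2 * yy^2 * xx^2, yy^2 * zz^2 * yy^2, zz^2 * xx^2 * yy^2 * xx^2 * zz^2}

section Cocycle

variable {X Q : Type} [MulAction (FreeGroup X) Q]

/-- The skew product permutation attached to an edge function. -/
def skewPerm (f : Q × X → ℚ) (x : X) : Equiv.Perm (Q × ℚ) where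
  toFun p := (FreeGroup.of x • p.1, p.2 + f (p.1, x))
  invFun p := ((FreeGroup.of x)⁻¹ • p.1, p.2 - f ((FreeGroup.of x)⁻¹ • p.1, x))
  left_inv p := by simp
  right_inv p := by simp

/-- The skew product action. -/
def skewAct (f : Q × X → ℚ) : FreeGroup X →* Equiv.Perm (Q × ℚ) :=
  FreeGroup.lift (skewPerm f)

/-- The sum of `f` along the path from `q` read by `g`. -/
def coc (f : Q × X → ℚ) (q : Q) (g : FreeGroup X) : ℚ := (skewAct f g (q, 0)).2

lemma skewAct_apply (f : Q × X → ℚ) (g : FreeGroup X) :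
    ∀ (q : Q) (a : ℚ), skewAct f g (q, a) = (g • q, a + coc f q g) := by
  suffices h : ∀ q : Q, ∃ d : ℚ, ∀ a : ℚ, skewAct f g (q, a) = (g • q, a + d) by
    intro q a
    obtain ⟨d, hd⟩ := h q
    rw [coc, hd, hd]; simp
  induction g using FreeGroup.induction_on with
  | C1 => intro q; exact ⟨0, by simp⟩
  | of x => intro q; exact ⟨f (q, x), fun a => by simp [skewAct, skewPerm]⟩
  | inv_of x _ =>
    intro q
    refine ⟨- f ((FreeGroup.of x)⁻¹ • q, x), fun a => ?_⟩
    have : skewAct f (FreeGroup.of x)⁻¹ = (skewPerm f x)⁻¹ := by simp [skewAct]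
    change skewAct f (FreeGroup.of x)⁻¹ (q, a) = _
    rw [this, Equiv.Perm.inv_def]
    simp [skewPerm, Equiv.symm, sub_eq_add_neg]
  | mul g h hg hh =>
    intro q
    obtain ⟨d, hd⟩ := hh q
    obtain ⟨e, he⟩ := hg (h • q)
    refine ⟨d + e, fun a => ?_⟩
    rw [map_mul, Equiv.Perm.mul_apply, hd, he, mul_smul, add_assoc]

lemma coc_one (f : Q × X → ℚ) (q : Q) : coc f q 1 = 0 := by simp [coc]

lemma coc_of (f : Q × X → ℚ) (q : Q) (x : X) : coc f q (FreeGroup.of x) = f (q, x) := by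
  simp [coc, skewAct, skewPerm]

lemma coc_mul (f : Q × X → ℚ) (q : Q) (g h : FreeGroup X) :
    coc f q (g * h) = coc f q h + coc f (h • q) g := by
  have h1 := skewAct_apply f (g * h) q 0
  rw [map_mul, Equiv.Perm.mul_apply, skewAct_apply, skewAct_apply] at h1
  have := congrArg Prod.snd h1
  simp at this
  exact this.symm

lemma coc_inv (f : Q × X → ℚ) (q : Q) (g : FreeGroup X) :
    coc f q g⁻¹ = - coc f (g⁻¹ • q) g := by
  have := coc_mul f q g g⁻¹
  rw [mul_inv_cancel, coc_one] at this
  linarith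

/-- Uniqueness principle for cocycles. -/
lemma coc_unique (f : Q × X → ℚ) (d : Q → FreeGroup X → ℚ)
    (hof : ∀ q x, d q (FreeGroup.of x) = f (q, x))
    (hmul : ∀ q g h, d q (g * h) = d q h + d (h • q) g) (g : FreeGroup X) :
    ∀ q, coc f q g = d q g := by
  have hone : ∀ q, d q 1 = 0 := fun q => by
    have := hmul q 1 1
    simp at this; exact this
  induction g using FreeGroup.induction_on with
  | C1 => intro q; rw [coc_one, hone]
  | of x => intro q; exact (coc_of f q x).trans (hof q x).symm
  | inv_of x _ =>
    intro q
    change coc f q (FreeGroup.of x)⁻¹ = d q (FreeGroup.of x)⁻¹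
    have := hmul q (FreeGroup.of x) (FreeGroup.of x)⁻¹
    rw [mul_inv_cancel, hone, hof] at this
    rw [coc_inv, coc_of]
    linarith
  | mul g h hg hh => intro q; rw [coc_mul, hmul, hg, hh]

/-- The cocycle as a linear map in the edge function. -/
def cocL (q : Q) (g : FreeGroup X) : (Q × X → ℚ) →ₗ[ℚ] ℚ where
  toFun f := coc f q g
  map_add' f f' := by
    refine coc_unique (f + f') (fun q g => coc f q g + coc f' q g) ?_ ?_ g q
    · intro q x; simp [coc_of]
    · intro q g h; simp only [coc_mul]; ring
  map_smul' r f := by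
    refine coc_unique (r • f) (fun q g => r * coc f q g) ?_ ?_ g q
    · intro q x; simp [coc_of]
    · intro q g h; simp only [coc_mul]; ring

lemma cocL_apply (q : Q) (g : FreeGroup X) (f : Q × X → ℚ) : cocL q g f = coc f q g := rfl

/-- The coboundary of a potential. -/
def cobL : (Q → ℚ) →ₗ[ℚ] (Q × X → ℚ) where
  toFun p e := p (FreeGroup.of e.2 • e.1) - p e.1
  map_add' p p' := by ext e; simp; ring
  map_smul' r p := by ext e; simp; ring

lemma coc_cob (p : Q → ℚ) (q : Q) (g : FreeGroup X) :
    coc (cobL (X := X) p) q g = p (g • q) - p q := by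
  refine coc_unique _ (fun q g => p (g • q) - p q) ?_ ?_ g q
  · intro q x; simp [cobL]
  · intro q g h; simp only [mul_smul]; ring

/-- `D`, `V` form a finite connected subgraph containing `q`. -/
structure ConnAt (D : Finset (Q × X)) (V : Finset Q) (q : Q) : Prop where
  base : q ∈ V
  ends : ∀ e ∈ D, e.1 ∈ V ∧ FreeGroup.of e.2 • e.1 ∈ V
  const : ∀ p : Q → ℚ, (∀ e ∈ D, cobL (X := X) p e = 0) → ∀ v ∈ V, p v = p q

/-- The path of `g` from `q` stays in `D`. -/
def Supp (D : Finset (Q × X)) (q : Q) (g : FreeGroup X) : Prop :=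
  ∀ f : Q × X → ℚ, (∀ e ∈ D, f e = 0) → coc f q g = 0

lemma ConnAt.union [DecidableEq Q] [DecidableEq X] {D D' : Finset (Q × X)} {V V' : Finset Q}
    {q r : Q} (h : ConnAt D V q) (h' : ConnAt D' V' r) (hr : r ∈ V) :
    ConnAt (D ∪ D') (V ∪ V') q where
  base := Finset.mem_union_left _ h.base
  ends e he := by
    rcases Finset.mem_union.1 he with he | he
    · exact ⟨Finset.mem_union_left _ (h.ends e he).1, Finset.mem_union_left _ (h.ends e he).2⟩
    · exact ⟨Finset.mem_union_right _ (h'.ends e he).1, Finset.mem_union_right _ (h'.ends e he).2⟩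
  const p hp v hv := by
    have h1 := h.const p fun e he => hp e (Finset.mem_union_left _ he)
    have h2 := h'.const p fun e he => hp e (Finset.mem_union_right _ he)
    rcases Finset.mem_union.1 hv with hv | hv
    · exact h1 v hv
    · rw [h2 v hv, h1 r hr]

lemma ConnAt.rebase {D : Finset (Q × X)} {V : Finset Q} {q r : Q} (h : ConnAt D V q)
    (hr : r ∈ V) : ConnAt D V r where
  base := hr
  ends := h.ends
  const p hp v hv := by rw [h.const p hp v hv, h.const p hp r hr]

lemma Supp.mono {D D' : Finset (Q × X)} (hD : D ⊆ D') {q : Q} {g : FreeGroup X}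
    (h : Supp D q g) : Supp D' q g := fun f hf => h f fun e he => hf e (hD he)

lemma exists_conn [DecidableEq Q] [DecidableEq X] (g : FreeGroup X) :
    ∀ q : Q, ∃ (D : Finset (Q × X)) (V : Finset Q), ConnAt D V q ∧ g • q ∈ V ∧ Supp D q g := by
  have hof : ∀ (x : X) (q : Q), ConnAt {(q, x)} {q, FreeGroup.of x • q} q := fun x q => by
    refine ⟨by simp, by simp, fun p hp v hv => ?_⟩
    have := hp (q, x) (by simp)
    simp [cobL] at this
    simp at hv
    rcases hv with rfl | rfl
    · rfl
    · linarith
  induction g using FreeGroup.induction_on with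
  | C1 => intro q; exact ⟨∅, {q}, ⟨by simp, by simp, by simp⟩, by simp, fun f _ => coc_one f q⟩
  | of x =>
    intro q
    exact ⟨_, _, hof x q, by simp,
      fun f hf => (coc_of f q x).trans (hf _ (by simp))⟩
  | inv_of x _ =>
    intro q
    refine ⟨_, _, (hof x ((FreeGroup.of x)⁻¹ • q)).rebase (by simp), ?_, fun f hf => ?_⟩
    · change (FreeGroup.of x)⁻¹ • q ∈ _
      simp
    · change coc f q (FreeGroup.of x)⁻¹ = 0
      rw [coc_inv, coc_of, hf _ (by simp), neg_zero]
  | mul g h hg hh =>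
    intro q
    obtain ⟨D, V, h1, h2, h3⟩ := hh q
    obtain ⟨D', V', h1', h2', h3'⟩ := hg (h • q)
    refine ⟨_, _, h1.union h1' h2, Finset.mem_union_right _ (by rwa [mul_smul]), fun f hf => ?_⟩
    rw [coc_mul, h3 f fun e he => hf e (Finset.mem_union_left _ he),
      h3' f fun e he => hf e (Finset.mem_union_right _ he), add_zero]

lemma exists_conn_finset [DecidableEq Q] [DecidableEq X] (q : Q) (m : ℕ)
    (g : Fin m → FreeGroup X) :
    ∃ (D : Finset (Q × X)) (V : Finset Q), ConnAt D V q ∧ ∀ i, Supp D q (g i) := by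
  induction m with
  | zero => exact ⟨∅, {q}, ⟨by simp, by simp, by simp⟩, fun i => i.elim0⟩
  | succ m ih =>
    obtain ⟨D, V, h, h'⟩ := ih fun i => g i.castSucc
    obtain ⟨D', V', k, -, k'⟩ := exists_conn (g (Fin.last m)) q
    refine ⟨_, _, h.union k h.base, fun i => ?_⟩
    refine Fin.lastCases ?_ (fun i => ?_) i
    · exact k'.mono Finset.subset_union_right
    · exact (h' i).mono Finset.subset_union_left

end Cocycle

section Counting

variable {X : Type}


/-- extension by zero -/
noncomputable def extZ {A : Type} (E : Finset A) : (E → ℚ) →ₗ[ℚ] (A → ℚ) :=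
  Function.ExtendByZero.linearMap ℚ (Subtype.val : E → A)

lemma extZ_mem {A : Type} (E : Finset A) (f : E → ℚ) (a : A) (ha : a ∈ E) :
    extZ E f a = f ⟨a, ha⟩ := by
  have := Subtype.val_injective.extend_apply f (0 : A → ℚ) (⟨a, ha⟩ : E)
  simpa [extZ] using this

lemma extZ_notMem {A : Type} (E : Finset A) (f : E → ℚ) (a : A) (ha : a ∉ E) :
    extZ E f a = 0 := by
  have := Function.extend_apply' (f := (Subtype.val : E → A)) f (0 : A → ℚ) a
    (by rintro ⟨b, rfl⟩; exact ha b.2)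
  simpa [extZ] using this

lemma lower_bound [DecidableEq X] (K : Subgroup (FreeGroup X)) [DecidableEq (FreeGroup X ⧸ K)]
    (S : Finset (FreeGroup X)) (hS : Subgroup.closure (S : Set (FreeGroup X)) = K)
    (E : Finset ((FreeGroup X ⧸ K) × X)) (V : Finset (FreeGroup X ⧸ K))
    (hb : ((1 : FreeGroup X) : FreeGroup X ⧸ K) ∈ V)
    (hE : ∀ e ∈ E, e.1 ∈ V ∧ FreeGroup.of e.2 • e.1 ∈ V) :
    E.card + 1 ≤ V.card + S.card := by
  set b : FreeGroup X ⧸ K := ((1 : FreeGroup X) : FreeGroup X ⧸ K) with hbdef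
  let T : (E → ℚ) →ₗ[ℚ] (S → ℚ) × (V.erase b → ℚ) :=
    LinearMap.prod
      (LinearMap.pi fun s => (cocL b s.1).comp (extZ E))
      (LinearMap.pi fun v => (cocL b (Quotient.out v.1)).comp (extZ E))
  have hinj : Function.Injective T := by
    rw [← LinearMap.ker_eq_bot, LinearMap.ker_eq_bot']
    intro f hf
    have h1 : ∀ s ∈ S, coc (extZ E f) b s = 0 := fun s hs =>
      congrFun (congrArg Prod.fst hf) ⟨s, hs⟩
    have h2 : ∀ v ∈ V.erase b, coc (extZ E f) b (Quotient.out v) = 0 := fun v hv =>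
      congrFun (congrArg Prod.snd hf) ⟨v, hv⟩
    have hfix : ∀ g ∈ K, g • b = b := fun g hg => by
      rw [hbdef]
      change ((g * 1 : FreeGroup X) : FreeGroup X ⧸ K) = _
      rw [mul_one, QuotientGroup.eq]; simpa using hg
    have hK : ∀ g ∈ K, coc (extZ E f) b g = 0 := by
      intro g hg
      rw [← hS] at hg
      induction hg using Subgroup.closure_induction with
      | mem s hs => exact h1 s hs
      | one => exact coc_one _ _
      | mul x y hx hy h h' => rw [coc_mul, hfix y (hS ▸ hy), h, h', add_zero]
      | inv x hx h => rw [coc_inv, hfix x⁻¹ (K.inv_mem (hS ▸ hx)), h, neg_zero]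
    have hV : ∀ g : FreeGroup X, g • b ∈ V → coc (extZ E f) b g = 0 := by
      intro g hg
      by_cases hgb : g • b = b
      · apply hK
        rw [hbdef] at hgb
        change ((g * 1 : FreeGroup X) : FreeGroup X ⧸ K) = _ at hgb
        rw [mul_one, QuotientGroup.eq] at hgb
        simpa using hgb
      · have h3 := h2 (g • b) (Finset.mem_erase.2 ⟨hgb, hg⟩)
        set o := Quotient.out (g • b) with ho
        have hok : o⁻¹ * g ∈ K := by
          rw [← QuotientGroup.eq, ho]
          change Quotient.mk'' (Quotient.out (g • b)) = _
          rw [Quotient.out_eq']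
          change ((g * 1 : FreeGroup X) : FreeGroup X ⧸ K) = _
          rw [mul_one]
        have h4 := coc_mul (extZ E f) b o (o⁻¹ * g)
        rw [hfix _ hok, hK _ hok, h3] at h4
        simpa using h4
    funext e
    obtain ⟨⟨q, x⟩, he⟩ := e
    obtain ⟨h5, h6⟩ := hE _ he
    obtain ⟨g, rfl⟩ := QuotientGroup.mk_surjective q
    have hgb : (g : FreeGroup X ⧸ K) = g • b := by
      rw [hbdef]
      change _ = ((g * 1 : FreeGroup X) : FreeGroup X ⧸ K)
      rw [mul_one]
    simp only [hgb] at h5 h6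
    rw [← mul_smul] at h6
    have h7 := coc_mul (extZ E f) b (FreeGroup.of x) g
    rw [hV _ h5, hV _ h6, coc_of, ← hgb, extZ_mem E f _ he] at h7
    simpa using h7.symm
  have h := LinearMap.finrank_le_finrank_of_injective hinj
  simp [Finset.card_erase_of_mem hb] at h
  have : 0 < V.card := Finset.card_pos.2 ⟨_, hb⟩
  omega

lemma upper_bound [DecidableEq X] (L : Subgroup (FreeGroup X)) [DecidableEq (FreeGroup X ⧸ L)]
    (m : ℕ) (g : Fin m → L) (h : Fin m → (L →* Multiplicative ℚ))
    (hgh : ∀ i j, h j (g i) = Multiplicative.ofAdd (if i = j then 1 else 0))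
    (D : Finset ((FreeGroup X ⧸ L) × X)) (V : Finset (FreeGroup X ⧸ L))
    (hD : ConnAt D V ((1 : FreeGroup X) : FreeGroup X ⧸ L))
    (hs : ∀ i, Supp D ((1 : FreeGroup X) : FreeGroup X ⧸ L) (g i : FreeGroup X)) :
    m + V.card ≤ D.card + 1 := by
  set b : FreeGroup X ⧸ L := ((1 : FreeGroup X) : FreeGroup X ⧸ L) with hbdef
  have hfix : ∀ g ∈ L, g • b = b := fun g hg => by
    rw [hbdef]
    change ((g * 1 : FreeGroup X) : FreeGroup X ⧸ L) = _
    rw [mul_one, QuotientGroup.eq]; simpa using hg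
  have hmem : ∀ (q : FreeGroup X ⧸ L) (g : FreeGroup X),
      (Quotient.out (g • q))⁻¹ * g * Quotient.out q ∈ L := by
    intro q g
    rw [mul_assoc, ← QuotientGroup.eq]
    have ho : ∀ r : FreeGroup X ⧸ L, ((Quotient.out r : FreeGroup X) : FreeGroup X ⧸ L) = r :=
      fun r => Quotient.out_eq' r
    rw [ho]
    conv_lhs => rw [← ho q]
    rfl
  let d : Fin m → (FreeGroup X ⧸ L) → FreeGroup X → ℚ := fun j q g =>
    Multiplicative.toAdd (h j ⟨_, hmem q g⟩)
  let f : Fin m → (FreeGroup X ⧸ L) × X → ℚ := fun j e => d j e.1 (FreeGroup.of e.2)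
  have hf : ∀ i j, coc (f j) b (g i) = if i = j then 1 else 0 := by
    intro i j
    rw [coc_unique (f j) (d j) (fun _ _ => rfl)]
    · have hb : Quotient.out b ∈ L := by
        have : b = Quotient.mk'' (Quotient.out b) := (Quotient.out_eq' b).symm
        conv_lhs at this => rw [hbdef]
        have h2 := QuotientGroup.eq.1 this
        simpa using h2
      have : (⟨_, hmem b (g i)⟩ : L) = (⟨_, hb⟩ : L)⁻¹ * g i * ⟨_, hb⟩ := by
        ext
        simp [hfix _ (g i).2]
      simp only [d]
      rw [this]
      simp [hgh, mul_comm]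
    · intro q g g'
      have : (⟨_, hmem q (g * g')⟩ : L) = ⟨_, hmem (g' • q) g⟩ * ⟨_, hmem q g'⟩ := by
        ext
        simp [mul_smul, mul_assoc]
      simp only [d]
      rw [this, map_mul, toAdd_mul, add_comm]
  let T0 : (V.erase b → ℚ) × (Fin m → ℚ) →ₗ[ℚ] ((FreeGroup X ⧸ L) × X → ℚ) :=
    LinearMap.coprod (cobL.comp (extZ (V.erase b))) (Fintype.linearCombination ℚ f)
  let T : (V.erase b → ℚ) × (Fin m → ℚ) →ₗ[ℚ] (D → ℚ) :=
    (LinearMap.funLeft ℚ ℚ (Subtype.val : D → _)).comp T0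
  have hinj : Function.Injective T := by
    rw [← LinearMap.ker_eq_bot, LinearMap.ker_eq_bot']
    rintro ⟨p, a⟩ hpa
    have h0 : ∀ e ∈ D, T0 (p, a) e = 0 := fun e he => congrFun hpa ⟨e, he⟩
    have hT0 : T0 (p, a) = cobL (extZ (V.erase b) p) + ∑ j, a j • f j := by
      simp [T0, Fintype.linearCombination_apply]
    have ha : a = 0 := by
      funext i
      have h1 := hs i _ h0
      rw [← cocL_apply, hT0, map_add, cocL_apply, coc_cob, hfix _ (g i).2, map_sum] at h1
      simpa [cocL_apply, hf] using h1
    subst ha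
    simp at hT0
    rw [hT0] at h0
    have h2 := hD.const _ h0
    have hp : p = 0 := by
      funext v
      have h3 := h2 v.1 (Finset.mem_of_mem_erase v.2)
      rw [extZ_mem _ _ _ v.2, extZ_notMem _ _ b (by simp)] at h3
      exact h3
    rw [hp]; rfl
  have h := LinearMap.finrank_le_finrank_of_injective hinj
  simp [Finset.card_erase_of_mem hD.base] at h
  have : 0 < V.card := Finset.card_pos.2 ⟨_, hD.base⟩
  omega

end Counting

section Paths

variable {X : Type}

/-- The group element of a positive word, the head acting first. -/
def wordE : List X → FreeGroup X
  | [] => 1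
  | x :: l => wordE l * FreeGroup.of x

/-- Edges of the path read by a positive word. -/
def pathE {Q : Type} [MulAction (FreeGroup X) Q] [DecidableEq Q] [DecidableEq X] :
    List X → Q → Finset (Q × X)
  | [], _ => ∅
  | x :: l, q => insert (q, x) (pathE l (FreeGroup.of x • q))

lemma pathE_ends {Q : Type} [MulAction (FreeGroup X) Q] [DecidableEq Q] [DecidableEq X]
    (l : List X) : ∀ (q : Q), ∀ e ∈ pathE l q, FreeGroup.of e.2 • e.1 = wordE l • q ∨
      FreeGroup.of e.2 • e.1 ∈ (pathE l q).image Prod.fst := by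
  induction l with
  | nil => intro q e he; simp [pathE] at he
  | cons x l ih =>
    intro q e he
    rw [pathE, Finset.mem_insert] at he
    rcases he with rfl | he
    · cases l with
      | nil => left; simp [wordE]
      | cons y l => right; simp [pathE]
    · rcases ih _ e he with h | h
      · left; rw [h, wordE, mul_smul]
      · right
        rw [pathE, Finset.image_insert]
        exact Finset.mem_insert_of_mem h

/-- Key counting statement: the number of independent elements in the preimage is bounded. -/
lemma key_count (t : X → List X) (φ : FreeGroup X →* FreeGroup X)
    (hφ : ∀ x, φ (FreeGroup.of x) = wordE (x :: t x)) (K : Subgroup (FreeGroup X))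
    (S : Finset (FreeGroup X)) (hS : Subgroup.closure (S : Set (FreeGroup X)) = K)
    (m : ℕ) (g : Fin m → K.comap φ) (h : Fin m → (K.comap φ →* Multiplicative ℚ))
    (hgh : ∀ i j, h j (g i) = Multiplicative.ofAdd (if i = j then 1 else 0)) :
    m ≤ S.card := by
  classical
  let L := K.comap φ
  have hL : L = K.comap φ := rfl
  obtain ⟨D, V, hD, hs⟩ := exists_conn_finset ((1 : FreeGroup X) : FreeGroup X ⧸ L) m
    (fun i => (g i : FreeGroup X))
  have hup := upper_bound L m g h hgh D V hD hs
  let io : FreeGroup X ⧸ L → FreeGroup X ⧸ K := Quotient.map' φ (by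
    intro a b hab
    rw [QuotientGroup.leftRel_apply] at hab ⊢
    simpa [hL] using hab)
  have io_mk : ∀ a : FreeGroup X, io (a : FreeGroup X ⧸ L) = ((φ a : FreeGroup X) : FreeGroup X ⧸ K) :=
    fun a => rfl
  have io_inj : Function.Injective io := by
    intro a b hab
    obtain ⟨a, rfl⟩ := QuotientGroup.mk_surjective a
    obtain ⟨b, rfl⟩ := QuotientGroup.mk_surjective b
    rw [io_mk, io_mk, QuotientGroup.eq] at hab
    rw [QuotientGroup.eq, hL]
    simpa using hab
  have io_smul : ∀ (a : FreeGroup X) (q : FreeGroup X ⧸ L), io (a • q) = φ a • io q := by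
    intro a q
    obtain ⟨b, rfl⟩ := QuotientGroup.mk_surjective q
    change ((φ (a * b) : FreeGroup X) : FreeGroup X ⧸ K) = ((φ a * φ b : FreeGroup X) : FreeGroup X ⧸ K)
    rw [map_mul]
  let E : Finset ((FreeGroup X ⧸ K) × X) := D.biUnion fun e => pathE (e.2 :: t e.2) (io e.1)
  let W := V.image io ∪ E.image Prod.fst
  have hlow := lower_bound K S hS E W
    (Finset.mem_union_left _ (Finset.mem_image.2 ⟨_, hD.base, by rw [io_mk, map_one]⟩)) (by
      intro e he
      refine ⟨Finset.mem_union_right _ (Finset.mem_image_of_mem _ he), ?_⟩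
      obtain ⟨d, hd, hed⟩ := Finset.mem_biUnion.1 he
      rcases pathE_ends _ _ e hed with h1 | h1
      · rw [h1, ← hφ, ← io_smul]
        exact Finset.mem_union_left _ (Finset.mem_image_of_mem _ (hD.ends d hd).2)
      · apply Finset.mem_union_right
        obtain ⟨e', he', h2⟩ := Finset.mem_image.1 h1
        exact Finset.mem_image.2 ⟨e', Finset.mem_biUnion.2 ⟨d, hd, he'⟩, h2⟩)
  have hcount : W.card + D.card ≤ E.card + V.card := by
    have e1 : W.card ≤ V.card + ((E.filter fun e => e.1 ∉ V.image io).image Prod.fst).card := by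
      refine (Finset.card_le_card ?_).trans ((Finset.card_union_le (V.image io) _).trans
        (Nat.add_le_add_right Finset.card_image_le _))
      intro w hw
      by_cases hwV : w ∈ V.image io
      · exact Finset.mem_union_left _ hwV
      · apply Finset.mem_union_right
        rcases Finset.mem_union.1 hw with hw | hw
        · exact absurd hw hwV
        · obtain ⟨e, he, rfl⟩ := Finset.mem_image.1 hw
          exact Finset.mem_image_of_mem _ (Finset.mem_filter.2 ⟨he, hwV⟩)
    have e2 := (Finset.card_image_le (s := E.filter fun e => e.1 ∉ V.image io) (f := Prod.fst))
    have e3 : D.card ≤ (E.filter fun e => e.1 ∈ V.image io).card := by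
      refine Finset.card_le_card_of_injOn (fun e => (io e.1, e.2)) ?_ ?_
      · intro e he
        refine Finset.mem_coe.2 (Finset.mem_filter.2 ⟨Finset.mem_biUnion.2 ⟨e, he, ?_⟩, ?_⟩)
        · simp [pathE]
        · exact Finset.mem_image_of_mem _ (hD.ends e he).1
      · rintro ⟨a, x⟩ - ⟨b, y⟩ - hab
        simp only [Prod.mk.injEq] at hab ⊢
        exact ⟨io_inj hab.1, hab.2⟩
    have e4 := Finset.card_filter_add_card_filter_not (s := E) (fun e => e.1 ∈ V.image io)
    omega
  omega

end Paths

section Rank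

lemma rk_le_of_closure {G : Type*} [Group G] (H : Subgroup G) (S : Set G)
    (hS : Subgroup.closure S = H) : rk H ≤ Cardinal.mk S :=
  ciInf_le' (fun S : {S : Set G // Subgroup.closure S = H} => Cardinal.mk S.1) ⟨S, hS⟩

lemma exists_rk {G : Type*} [Group G] (H : Subgroup G) :
    ∃ S : Set G, Subgroup.closure S = H ∧ Cardinal.mk S = rk H := by
  haveI : Nonempty {S : Set G // Subgroup.closure S = H} := ⟨⟨H, Subgroup.closure_eq H⟩⟩
  obtain ⟨S, hS⟩ := ciInf_mem (fun S : {S : Set G // Subgroup.closure S = H} => Cardinal.mk S.1)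
  exact ⟨S.1, S.2, hS⟩

lemma exists_rk_fg {G : Type*} [Group G] (H : Subgroup G) (hH : H.FG) :
    ∃ S : Finset G, Subgroup.closure (S : Set G) = H ∧ (S.card : Cardinal) = rk H := by
  obtain ⟨S, hS, hr⟩ := exists_rk H
  obtain ⟨S', hS'⟩ := hH
  have h1 := rk_le_of_closure H _ hS'
  rw [← hr] at h1
  have h2 : Cardinal.mk S < Cardinal.aleph0 :=
    h1.trans_lt (Cardinal.lt_aleph0_of_finite _)
  have hfin : S.Finite := Cardinal.lt_aleph0_iff_set_finite.1 h2
  refine ⟨hfin.toFinset, by simpa using hS, ?_⟩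
  rw [← hr]
  have := Cardinal.mk_coe_finset (s := hfin.toFinset)
  rw [← this]
  simp

lemma fg_of_rk_lt {G : Type*} [Group G] (H : Subgroup G) (h : rk H < Cardinal.aleph0) : H.FG := by
  obtain ⟨S, hS, hr⟩ := exists_rk H
  rw [← hr] at h
  have hfin : S.Finite := Cardinal.lt_aleph0_iff_set_finite.1 h
  exact ⟨hfin.toFinset, by simpa using hS⟩

lemma rk_lt_of_fg {G : Type*} [Group G] (H : Subgroup G) (h : H.FG) : rk H < Cardinal.aleph0 := by
  obtain ⟨S, hS, hr⟩ := exists_rk_fg H h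
  rw [← hr]
  exact Cardinal.natCast_lt_aleph0

lemma rk_map_le {G G' : Type} [Group G] [Group G'] (f : G →* G') (H : Subgroup G) :
    rk (H.map f) ≤ rk H := by
  obtain ⟨S, hS, hr⟩ := exists_rk H
  rw [← hr]
  refine (rk_le_of_closure _ (f '' S) ?_).trans Cardinal.mk_image_le
  rw [← hS, MonoidHom.map_closure]

/-- A homomorphism along which ranks of preimages of f.g. subgroups do not grow. -/
def Good {G G' : Type} [Group G] [Group G'] (f : G →* G') : Prop :=
  ∀ K : Subgroup G', K.FG → rk (K.comap f) ≤ rk K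

lemma Good.comp {G G' G'' : Type} [Group G] [Group G'] [Group G''] {f : G' →* G''} {f' : G →* G'}
    (hf : Good f) (hf' : Good f') : Good (f.comp f') := by
  intro K hK
  rw [← Subgroup.comap_comap]
  have h1 := hf K hK
  exact (hf' _ (fg_of_rk_lt _ (h1.trans_lt (rk_lt_of_fg K hK)))).trans h1

lemma Good.isInert {G G' : Type} [Group G] [Group G'] {f : G →* G'} (hf : Good f) :
    IsInert f.range := by
  intro K hK
  rw [← Subgroup.map_comap_eq]
  exact (rk_map_le _ _).trans (hf K hK)

lemma good_of_inverse {G G' : Type} [Group G] [Group G'] (f : G →* G') (f' : G' →* G)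
    (h1 : f.comp f' = MonoidHom.id _) (h2 : f'.comp f = MonoidHom.id _) : Good f := by
  intro K _
  have : K.comap f = K.map f' := by
    ext g
    constructor
    · intro hg
      exact ⟨f g, hg, DFunLike.congr_fun h2 g⟩
    · rintro ⟨k, hk, rfl⟩
      have := DFunLike.congr_fun h1 k
      simp at this
      simpa [this] using hk
  rw [this]
  exact rk_map_le _ _

lemma good_word {X : Type} (t : X → List X) (φ : FreeGroup X →* FreeGroup X)
    (hφ : ∀ x, φ (FreeGroup.of x) = wordE (x :: t x)) : Good φ := by
  intro K hK
  obtain ⟨S, hS, hr⟩ := exists_rk_fg K hK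
  rw [← hr]
  set L := K.comap φ with hL
  obtain ⟨ι, ⟨B⟩⟩ := (inferInstance : IsFreeGroup L).nonempty_basis
  have hι : Cardinal.mk ι ≤ S.card := by
    by_contra hlt
    rw [not_le] at hlt
    have h1 : ((S.card + 1 : ℕ) : Cardinal) ≤ Cardinal.mk ι := by
      have := Order.succ_le_of_lt hlt
      rw [Cardinal.succ_natCast] at this
      exact_mod_cast this
    have h2 : Cardinal.mk (Fin (S.card + 1)) ≤ Cardinal.mk ι := by simpa using h1
    obtain ⟨j⟩ := h2
    classical
    have := key_count t φ hφ K S hS (S.card + 1) (fun i => B (j i))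
      (fun k => B.lift fun a => Multiplicative.ofAdd (if a = j k then 1 else 0)) (by
        intro i k
        simp)
    omega
  refine le_trans ?_ hι
  have hcl : Subgroup.closure (Set.range B) = ⊤ := by
    have h1 : Set.range B = B.repr.symm.toMonoidHom '' Set.range FreeGroup.of := by
      rw [← Set.range_comp]; rfl
    rw [h1, ← MonoidHom.map_closure, FreeGroup.closure_range_of, ← MonoidHom.range_eq_map]
    exact MonoidHom.range_eq_top.2 B.repr.symm.surjective
  refine (rk_le_of_closure L (L.subtype '' Set.range B) ?_).trans
    (Cardinal.mk_image_le.trans Cardinal.mk_range_le)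
  rw [← MonoidHom.map_closure, hcl, ← MonoidHom.range_eq_map, Subgroup.range_subtype]

end Rank

section Example

open FreeGroup

/-- squaring endomorphism -/
def phiA : FreeGroup (Fin 3) →* FreeGroup (Fin 3) :=
  FreeGroup.lift ![of 0 * of 0, of 1 * of 1, of 2 * of 2]

/-- change of basis -/
def phiB : FreeGroup (Fin 3) →* FreeGroup (Fin 3) :=
  FreeGroup.lift ![(of 0)⁻¹, of 0 * of 1 * of 0, of 2]

/-- inverse change of basis -/
def phiB' : FreeGroup (Fin 3) →* FreeGroup (Fin 3) :=
  FreeGroup.lift ![(of 0)⁻¹, of 0 * of 1 * of 0, of 2]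

/-- first one-generator endomorphism -/
def phiC : FreeGroup (Fin 3) →* FreeGroup (Fin 3) :=
  FreeGroup.lift ![of 0 * of 1 * of 0 * of 2 * of 0 * of 1 * of 0, of 1, of 2]

/-- second one-generator endomorphism -/
def phiD : FreeGroup (Fin 3) →* FreeGroup (Fin 3) :=
  FreeGroup.lift ![of 0, of 1, of 2 * of 1 * of 2]

lemma good_phiA : Good phiA := by
  refine good_word ![[0], [1], [2]] _ ?_
  intro x
  fin_cases x <;> simp [phiA, wordE]

lemma good_phiB : Good phiB := by
  refine good_of_inverse _ phiB' ?_ ?_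
  all_goals
    ext x
    fin_cases x <;> simp [phiB, phiB', mul_assoc]

lemma good_phiC : Good phiC := by
  refine good_word ![[1, 0, 2, 0, 1, 0], [], []] _ ?_
  intro x
  fin_cases x <;> simp [phiC, wordE, mul_assoc]

lemma good_phiD : Good phiD := by
  refine good_word ![[], [], [1, 2]] _ ?_
  intro x
  fin_cases x <;> simp [phiD, wordE, mul_assoc]

lemma hex_eq : Hex = (phiA.comp (phiB.comp (phiC.comp phiD))).range := by
  rw [MonoidHom.range_eq_map, ← FreeGroup.closure_range_of, MonoidHom.map_closure, Hex]
  congr 1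
  set P := phiA.comp (phiB.comp (phiC.comp phiD)) with hP
  have h0 : P (of 0) = yy^2 * zz^2 * yy^2 := by
    simp [hP, phiA, phiB, phiC, phiD, xx, yy, zz, pow_two, mul_assoc]
  have h1 : P (of 1) = xx^2 * yy^2 * xx^2 := by
    simp [hP, phiA, phiB, phiC, phiD, xx, yy, zz, pow_two, mul_assoc]
  have h2 : P (of 2) = zz^2 * xx^2 * yy^2 * xx^2 * zz^2 := by
    simp [hP, phiA, phiB, phiC, phiD, xx, yy, zz, pow_two, mul_assoc]
  rw [← h0, ← h1, ← h2]
  ext g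
  simp only [Set.mem_insert_iff, Set.mem_singleton_iff, Set.mem_image, Set.mem_range,
    exists_exists_eq_and]
  constructor
  · rintro (h | h | h)
    · exact ⟨1, h.symm⟩
    · exact ⟨0, h.symm⟩
    · exact ⟨2, h.symm⟩
  · rintro ⟨i, rfl⟩
    fin_cases i <;> simp

end Example

/-- `H = ⟨x²y²x², y²z²y², z²x²y²x²z²⟩` is inert in `F_3`. -/
theorem example_subgroup_isInert : IsInert Hex := by
  rw [hex_eq]
  exact (good_phiA.comp (good_phiB.comp (good_phiC.comp good_phiD))).isInert
end

section
/- Let F_3 be the free group with free basis {x, y, z} and let H = ⟨x²y²x², y²z²y², z²x²y²x²z²⟩. If g ∈ F_3 and g^i ∈ H for some integer i ≥ 1, then g ∈ ⟨x², y², z²⟩. -/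
namespace RootMem

/-- Running a partial automaton along a word. -/
def run {V A : Type} (step : V → A → Option V) : V → List A → Option V
  | p, [] => some p
  | p, l :: L => (step p l).bind fun q => run step q L

theorem run_append {V A : Type} (step : V → A → Option V) (p : V) (L M : List A) :
    run step p (L ++ M) = (run step p L).bind fun q => run step q M := by
  induction L generalizing p with
  | nil => simp [run]
  | cons l L ih =>
    simp only [List.cons_append, run, Option.bind_assoc, ih]

theorem run_append_some {V A : Type} {step : V → A → Option V} {p q : V} {L M : List A} :
    run step p (L ++ M) = some q ↔ ∃ r, run step p L = some r ∧ run step r M = some q := by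
  rw [run_append, Option.bind_eq_some_iff]

/-- Every transition can be undone by the inverse letter. -/
def Inv {V : Type} (step : V → Fin 3 × Bool → Option V) : Prop :=
  ∀ p l q, step p l = some q → step q (l.1, !l.2) = some p

theorem run_invRev {V : Type} {step : V → Fin 3 × Bool → Option V} (hs : Inv step)
    {L : List (Fin 3 × Bool)} {p q : V} (h : run step p L = some q) :
    run step q (FreeGroup.invRev L) = some p := by
  induction L generalizing p with
  | nil => simp only [run, Option.some.injEq] at h; subst h; rfl
  | cons l L ih =>
    simp only [run, Option.bind_eq_some_iff] at h
    obtain ⟨r, h1, h2⟩ := h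
    rw [FreeGroup.invRev_cons, run_append_some]
    refine ⟨r, ih h2, ?_⟩
    simp [FreeGroup.invRev, run, hs _ _ _ h1]

theorem run_step {V : Type} {step : V → Fin 3 × Bool → Option V} (hs : Inv step)
    {L M : List (Fin 3 × Bool)} (hr : FreeGroup.Red.Step L M) {p q : V}
    (h : run step p L = some q) : run step p M = some q := by
  cases hr with
  | @not L₁ L₂ x b =>
    rw [run_append_some] at h ⊢
    obtain ⟨r, h1, h2⟩ := h
    simp only [run, Option.bind_eq_some_iff] at h2
    obtain ⟨s, h3, t, h4, h5⟩ := h2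
    have h6 := hs _ _ _ h3
    rw [h4] at h6
    cases h6
    exact ⟨_, h1, h5⟩

theorem run_red {V : Type} {step : V → Fin 3 × Bool → Option V} (hs : Inv step)
    {L M : List (Fin 3 × Bool)} (hr : FreeGroup.Red L M) {p q : V}
    (h : run step p L = some q) : run step p M = some q := by
  induction hr with
  | refl => exact h
  | tail _ h2 ih => exact run_step hs h2 ih

theorem run_closure {V : Type} {step : V → Fin 3 × Bool → Option V} (hs : Inv step) (b : V)
    (S : Set (FreeGroup (Fin 3))) (hS : ∀ s ∈ S, run step b s.toWord = some b)
    {h : FreeGroup (Fin 3)} (hh : h ∈ Subgroup.closure S) :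
    run step b h.toWord = some b := by
  induction hh using Subgroup.closure_induction with
  | mem x hx => exact hS x hx
  | one => simp [run]
  | mul x y _ _ hx hy =>
    rw [FreeGroup.toWord_mul]
    exact run_red hs FreeGroup.reduce.red (run_append_some.2 ⟨b, hx, hy⟩)
  | inv x _ hx =>
    rw [FreeGroup.toWord_inv]
    exact run_invRev hs hx

theorem run_conj {V : Type} {step : V → Fin 3 × Bool → Option V} (hs : Inv step) {b : V}
    {u w : List (Fin 3 × Bool)} (h : run step b (u ++ w ++ FreeGroup.invRev u) = some b) :
    ∃ p, run step b u = some p ∧ run step p w = some p := by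
  rw [run_append_some] at h
  obtain ⟨r, h1, h2⟩ := h
  rw [run_append_some] at h1
  obtain ⟨p, h3, h4⟩ := h1
  have h5 := run_invRev hs h2
  rw [FreeGroup.invRev_invRev, h3] at h5
  cases h5
  exact ⟨_, h3, h4⟩

theorem run_replicate {V A : Type} {step : V → A → Option V} {p : V} {w : List A}
    (h : run step p w = some p) (n : ℕ) : run step p (List.replicate n w).flatten = some p := by
  induction n with
  | zero => simp [run]
  | succ n ih =>
    rw [List.replicate_succ, List.flatten_cons, run_append_some]
    exact ⟨p, h, ih⟩

/-- The Stallings automaton of `⟨x², y², z²⟩`. -/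
def stepK (p : Fin 4) (l : Fin 3 × Bool) : Option (Fin 4) :=
  if p = 0 then some l.1.succ else if p = l.1.succ then some 0 else none

/-- Positive edges of the Stallings automaton of `Hex`. -/
def edges : List (Fin 20 × Fin 3 × Fin 20) :=
  [(0, 0, 9), (9, 0, 1), (1, 1, 10), (10, 1, 2), (2, 0, 11), (11, 0, 0),
   (0, 1, 12), (12, 1, 3), (3, 2, 13), (13, 2, 4), (4, 1, 14), (14, 1, 0),
   (0, 2, 15), (15, 2, 5), (5, 0, 16), (16, 0, 6), (6, 1, 17), (17, 1, 7),
   (7, 0, 18), (18, 0, 8), (8, 2, 19), (19, 2, 0)]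

/-- The Stallings automaton of `Hex`. -/
def stepH (p : Fin 20) (l : Fin 3 × Bool) : Option (Fin 20) :=
  if l.2 then (edges.find? fun e => e.1 = p ∧ e.2.1 = l.1).map fun e => e.2.2
  else (edges.find? fun e => e.2.2 = p ∧ e.2.1 = l.1).map fun e => e.1

theorem invK : Inv stepK := by unfold Inv; decide

set_option maxRecDepth 100000 in
set_option maxHeartbeats 4000000 in
theorem invH : Inv stepH := by
  have h : ∀ p l, ∀ q ∈ stepH p l, stepH q (l.1, !l.2) = some p := by
    decide +kernel
  exact h

theorem noCycleH : ∀ p l, run stepH p (List.replicate 5 l) = none := by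
  decide +kernel

theorem changeK : ∀ p l q l' r, stepK p l = some q → stepK q l' = some r → l.1 ≠ l'.1 →
    q = 0 := by
  decide +kernel

theorem runH {h : FreeGroup (Fin 3)} (hh : h ∈ Hex) : run stepH 0 h.toWord = some 0 := by
  refine run_closure invH 0 _ ?_ hh
  rintro s (rfl | rfl | rfl) <;> decide +kernel

theorem runK {h : FreeGroup (Fin 3)} (hh : h ∈ Subgroup.closure {xx^2, yy^2, zz^2}) :
    run stepK 0 h.toWord = some 0 := by
  refine run_closure invK 0 _ ?_ hh
  rintro s (rfl | rfl | rfl) <;> decide +kernel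

theorem sq_mem (a : Fin 3) :
    FreeGroup.of a ^ 2 ∈ Subgroup.closure {xx^2, yy^2, zz^2} := by
  apply Subgroup.subset_closure
  fin_cases a <;> simp [xx, yy, zz]

/-- Representatives of the vertices of `stepK`. -/
def rep : Fin 4 → FreeGroup (Fin 3) := Fin.cases 1 FreeGroup.of

theorem step_rep (p : Fin 4) (l : Fin 3 × Bool) (q : Fin 4) (h : stepK p l = some q) :
    rep p * FreeGroup.mk [l] * (rep q)⁻¹ ∈ Subgroup.closure {xx^2, yy^2, zz^2} := by
  obtain ⟨a, b⟩ := l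
  have hb : FreeGroup.mk [(a, b)] = FreeGroup.of a ∨
      FreeGroup.mk [(a, b)] = (FreeGroup.of a)⁻¹ := by
    cases b
    · right; rfl
    · left; rfl
  have h2 := sq_mem a
  unfold stepK at h
  split_ifs at h with h0 h1
  · subst h0
    cases h
    rcases hb with hb | hb <;> rw [hb] <;> simp only [rep, Fin.cases_zero, Fin.cases_succ]
    · simp
    · simpa [pow_two] using inv_mem h2
  · subst h1
    cases h
    rcases hb with hb | hb <;> rw [hb] <;> simp only [rep, Fin.cases_zero, Fin.cases_succ]
    · simpa [pow_two] using h2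
    · simp

theorem run_rep (L : List (Fin 3 × Bool)) (p q : Fin 4) (h : run stepK p L = some q) :
    rep p * FreeGroup.mk L * (rep q)⁻¹ ∈ Subgroup.closure {xx^2, yy^2, zz^2} := by
  induction L generalizing p with
  | nil =>
    simp only [run, Option.some.injEq] at h
    subst h
    simp [← FreeGroup.one_eq_mk]
  | cons l L ih =>
    simp only [run, Option.bind_eq_some_iff] at h
    obtain ⟨r, h1, h2⟩ := h
    have h3 := mul_mem (step_rep p l r h1) (ih r h2)
    have h4 : (FreeGroup.mk (l :: L) : FreeGroup (Fin 3)) = FreeGroup.mk [l] * FreeGroup.mk L := by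
      rw [FreeGroup.mul_mk]; rfl
    rw [h4]
    convert h3 using 1
    group

theorem mem_of_run {g : FreeGroup (Fin 3)} (h : run stepK 0 g.toWord = some 0) :
    g ∈ Subgroup.closure {xx^2, yy^2, zz^2} := by
  have := run_rep _ _ _ h
  simpa [rep, FreeGroup.mk_toWord] using this

theorem Hex_le : Hex ≤ Subgroup.closure {xx^2, yy^2, zz^2} := by
  have hx := sq_mem 0
  have hy := sq_mem 1
  have hz := sq_mem 2
  rw [Hex, Subgroup.closure_le]
  rintro s (rfl | rfl | rfl)
  · exact mul_mem (mul_mem hx hy) hx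
  · exact mul_mem (mul_mem hy hz) hy
  · exact mul_mem (mul_mem (mul_mem (mul_mem hz hx) hy) hx) hz

/-- A word with a change of letter synchronizes `stepK`. -/
theorem sync {d e : List (Fin 3 × Bool)} {l l' : Fin 3 × Bool} (hne : l.1 ≠ l'.1)
    {p q : Fin 4} (h : run stepK p (d ++ l :: l' :: e) = some q) :
    run stepK 0 (l' :: e) = some q := by
  rw [run_append_some] at h
  obtain ⟨r, _, h2⟩ := h
  rw [run, Option.bind_eq_some_iff] at h2
  obtain ⟨s, h3, h4⟩ := h2
  have h5 := h4
  rw [run, Option.bind_eq_some_iff] at h5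
  obtain ⟨t, h6, _⟩ := h5
  have := changeK _ _ _ _ _ h3 h6 hne
  rwa [this] at h4

end RootMem

open RootMem in
/-- If `gⁱ ∈ H = ⟨x²y²x², y²z²y², z²x²y²x²z²⟩` for some `i ≥ 1`, then `g ∈ ⟨x², y², z²⟩`. -/
theorem example_root_mem (g : FreeGroup (Fin 3)) (i : ℕ) (hi : 1 ≤ i) (hg : g ^ i ∈ Hex) :
    g ∈ Subgroup.closure {xx^2, yy^2, zz^2} := by
  obtain ⟨n, rfl⟩ : ∃ n, i = n + 1 := ⟨i - 1, by omega⟩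
  have hH := runH hg
  have hK := runK (Hex_le hg)
  have hred : FreeGroup.IsReduced g.toWord := FreeGroup.isReduced_toWord
  have hw := FreeGroup.reduceCyclically.conj_conjugator_reduceCyclically g.toWord
  have hcr := (FreeGroup.reduceCyclically.isCyclicallyReduced hred).isReduced
  rw [FreeGroup.toWord_pow, FreeGroup.reduceCyclically.reduce_flatten_replicate_succ hred]
    at hH hK
  generalize FreeGroup.reduceCyclically g.toWord = c at *
  generalize FreeGroup.reduceCyclically.conjugator g.toWord = u at *
  obtain ⟨p, hp1, hp2⟩ := run_conj invK hK
  obtain ⟨v, -, hv⟩ := run_conj invH hH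
  have key : run stepK p c = some p := by
    by_cases hc : c.IsChain (fun a b => a.1 = b.1)
    · have hc2 : c.IsChain (· = ·) := by
        rw [List.isChain_iff_forall_rel_of_append_cons_cons] at hc ⊢
        rw [FreeGroup.IsReduced, List.isChain_iff_forall_rel_of_append_cons_cons] at hcr
        intro a b l₁ l₂ h
        exact Prod.ext (hc h) (hcr h (hc h))
      cases c with
      | nil => rfl
      | cons l c =>
        exfalso
        rw [List.isChain_cons_eq_iff_eq_replicate] at hc2
        have h5 := run_replicate hv 5
        have h6 : ∃ k, (List.replicate 5 (List.replicate (n + 1) (l :: c)).flatten).flatten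
            = List.replicate 5 l ++ List.replicate k l := by
          refine ⟨5 * ((n + 1) * (c.length + 1)) - 5, ?_⟩
          rw [hc2, ← List.replicate_succ, List.flatten_replicate_replicate,
            List.flatten_replicate_replicate, List.replicate_append_replicate]
          congr 1
          have : 1 ≤ (n + 1) * (c.length + 1) := Nat.mul_pos (by omega) (by omega)
          simp only [List.length_replicate]
          omega
        obtain ⟨k, hk⟩ := h6
        rw [hk, run_append, noCycleH] at h5
        simp at h5
    · rw [List.isChain_iff_forall_rel_of_append_cons_cons] at hc
      push Not at hc
      obtain ⟨l, l', d, e, rfl, hne⟩ := hc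
      cases n with
      | zero => simpa using hp2
      | succ n =>
        rw [List.replicate_succ, List.replicate_succ, List.flatten_cons, List.flatten_cons,
          run_append_some] at hp2
        obtain ⟨q, h1, h2⟩ := hp2
        rw [run_append_some] at h2
        obtain ⟨r, h3, -⟩ := h2
        have h4 := sync hne h1
        rw [sync hne h3] at h4
        cases h4
        have h5 := run_invRev invK h1
        rw [run_invRev invK h3] at h5
        cases h5
        exact h1
  apply mem_of_run
  rw [← hw, run_append_some]
  exact ⟨p, run_append_some.2 ⟨p, hp1, key⟩, run_invRev invK hp1⟩
end
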